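/- arXiv:1802.09682 — 3 statements merged into one kernel-verified Lean document; each statement's English description precedes it below -/
import Mathlib

section
/- Let p : ℝᵈ → ℝ be a nonnegative, integrable probability density (∫ p = 1) that is log-concave, i.e., p((1−λ)x + λy) ≥ p(x)^{1−λ} p(y)^{λ} for all x, y ∈ ℝᵈ and λ ∈ [0,1], and symmetric, i.e., p(−x) = p(x) for all x. Define f(x) := ∫_{{ξ ∈ ℝᵈ : |⟨ξ, x⟩| ≤ 1}} p(ξ) dξ. Then f(x) > 0 for every x ∈ ℝᵈ and the function h(x) := 1/f(x) is convex on ℝᵈ. -/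
open MeasureTheory Filter
open scoped InnerProductSpace

/-- One-dimensional Brunn-Minkowski. -/
theorem aux_bm {A B C : Set ℝ} (hA : MeasurableSet A) (hB : MeasurableSet B)
    (hAn : A.Nonempty) (hBn : B.Nonempty) (h : ∀ a ∈ A, ∀ b ∈ B, a + b ∈ C) :
    volume A + volume B ≤ volume C := by
  obtain ⟨a0, ha0⟩ := hAn
  obtain ⟨b0, hb0⟩ := hBn
  have key : ∀ K : Set ℝ, K ⊆ A → IsCompact K → ∀ L : Set ℝ, L ⊆ B → IsCompact L →
      volume K + volume L ≤ volume C := by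
    intro K hKA hK L hLB hL
    have hK' : IsCompact (insert a0 K) := hK.insert a0
    have hL' : IsCompact (insert b0 L) := hL.insert b0
    obtain ⟨m, hm, hmax⟩ := hK'.exists_isGreatest ⟨a0, Set.mem_insert _ _⟩
    obtain ⟨l, hl, hmin⟩ := hL'.exists_isLeast ⟨b0, Set.mem_insert _ _⟩
    have hKA' : insert a0 K ⊆ A := Set.insert_subset ha0 hKA
    have hLB' : insert b0 L ⊆ B := Set.insert_subset hb0 hLB
    have h1 : volume ((fun x => x + l) '' K) = volume K := by
      simp
    have h2 : volume ((fun x => m + x) '' L) = volume L := by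
      simp
    have hd : AEDisjoint volume ((fun x => x + l) '' K) ((fun x => m + x) '' L) := by
      refine measure_mono_null (t := {m + l}) ?_ (by simp)
      rintro _ ⟨⟨k, hk, rfl⟩, ⟨j, hj, hjk⟩⟩
      have e1 := hmax (Set.mem_insert_of_mem _ hk)
      have e2 := hmin (Set.mem_insert_of_mem _ hj)
      simp only at hjk
      simp only [Set.mem_singleton_iff]
      linarith
    have hLm : MeasurableSet ((fun x => m + x) '' L) :=
      (hL.image (by fun_prop)).measurableSet
    rw [← h1, ← h2, ← measure_union₀ hLm.nullMeasurableSet hd]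
    refine measure_mono ?_
    rintro _ (⟨k, hk, rfl⟩ | ⟨j, hj, rfl⟩)
    · exact h _ (hKA hk) _ (hLB' hl)
    · exact h _ (hKA' hm) _ (hLB hj)
  rw [hA.measure_eq_iSup_isCompact, hB.measure_eq_iSup_isCompact]
  simp only [iSup_and']
  refine ENNReal.biSup_add_biSup_le' (p := fun K => K ⊆ A ∧ IsCompact K) (q := fun K => K ⊆ B ∧ IsCompact K) ⟨∅, by simp⟩ ⟨∅, by simp⟩ ?_
  rintro K ⟨h1, h2⟩ L ⟨h3, h4⟩
  exact key K h1 h2 L h3 h4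

open scoped Pointwise in
theorem aux_bm_weighted {A B C : Set ℝ} (hA : MeasurableSet A) (hB : MeasurableSet B)
    (hAn : A.Nonempty) (hBn : B.Nonempty) {w₁ w₂ : ℝ} (h1 : 0 < w₁) (h2 : 0 < w₂)
    (h : ∀ a ∈ A, ∀ b ∈ B, w₁ * a + w₂ * b ∈ C) :
    ENNReal.ofReal w₁ * volume A + ENNReal.ofReal w₂ * volume B ≤ volume C := by
  have := aux_bm (A := w₁ • A) (B := w₂ • B) (C := C) (hA.const_smul₀ _) (hB.const_smul₀ _)
    hAn.smul_set hBn.smul_set (by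
      rintro _ ⟨a, ha, rfl⟩ _ ⟨b, hb, rfl⟩
      exact h a ha b hb)
  rw [Measure.addHaar_smul, Measure.addHaar_smul] at this
  simpa [abs_of_pos h1, abs_of_pos h2] using this

/-- layer-cake consequence, normalised sup. -/
theorem aux_L {F G H : ℝ → ENNReal} (hF : Measurable F) (hG : Measurable G) (hH : Measurable H)
    (hF1 : ∀ x, F x ≤ 1) (hG1 : ∀ x, G x ≤ 1)
    (hFs : ∀ s < 1, ∃ x, s < F x) (hGs : ∀ s < 1, ∃ x, s < G x)
    {w₁ w₂ : ℝ} (h1 : 0 < w₁) (h2 : 0 < w₂)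
    (h : ∀ s : ENNReal, s ≠ 0 → s < 1 → ∀ x y, s < F x → s < G y → s ≤ H (w₁ * x + w₂ * y)) :
    ENNReal.ofReal w₁ * (∫⁻ x, F x) + ENNReal.ofReal w₂ * (∫⁻ x, G x) ≤ ∫⁻ x, H x := by
  have lay : ∀ K : ℝ → ENNReal, Measurable K → (∀ x, K x ≤ 1) →
      ∫⁻ x, K x = ∫⁻ s in Set.Ioi (0:ℝ), volume {x | s < (K x).toReal} := by
    intro K hK hK1
    rw [← lintegral_eq_lintegral_meas_lt volume (f := fun x => (K x).toReal)
      (Eventually.of_forall fun x => ENNReal.toReal_nonneg) hK.ennreal_toReal.aemeasurable]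
    refine lintegral_congr fun x => ?_
    rw [ENNReal.ofReal_toReal (ne_top_of_le_ne_top ENNReal.one_ne_top (hK1 x))]
  have layH : ∫⁻ s in Set.Ioi (0:ℝ), volume {x | s ≤ (min (H x) 1).toReal} ≤ ∫⁻ x, H x := by
    rw [← lintegral_eq_lintegral_meas_le volume (f := fun x => (min (H x) 1).toReal)
      (Eventually.of_forall fun x => ENNReal.toReal_nonneg)
      (hH.min measurable_const).ennreal_toReal.aemeasurable]
    refine lintegral_mono fun x => ?_
    rw [ENNReal.ofReal_toReal (ne_top_of_le_ne_top ENNReal.one_ne_top (min_le_right _ _))]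
    exact min_le_left _ _
  refine le_trans ?_ layH
  have mm : ∀ K : ℝ → ENNReal, Measurable fun s : ℝ => volume {x | s < (K x).toReal} := by
    intro K
    refine Antitone.measurable fun s t hst => measure_mono fun x hx => ?_
    exact lt_of_le_of_lt hst hx
  rw [lay F hF hF1, lay G hG hG1, ← lintegral_const_mul _ (mm F), ← lintegral_const_mul _ (mm G),
    ← lintegral_add_left ((mm F).const_mul _)]
  refine setLIntegral_mono' measurableSet_Ioi fun s hs => ?_
  have hs0 : 0 < s := hs
  have conv : ∀ K : ENNReal, K ≤ 1 → (s < K.toReal ↔ ENNReal.ofReal s < K) := by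
    intro K hK
    rw [ENNReal.ofReal_lt_iff_lt_toReal hs0.le (ne_top_of_le_ne_top ENNReal.one_ne_top hK)]
  by_cases hs1 : s < 1
  · have hs1' : ENNReal.ofReal s < 1 := by simpa using hs1
    refine aux_bm_weighted ?_ ?_ ?_ ?_ h1 h2 ?_
    · exact measurableSet_lt measurable_const hF.ennreal_toReal
    · exact measurableSet_lt measurable_const hG.ennreal_toReal
    · obtain ⟨x, hx⟩ := hFs _ hs1'
      exact ⟨x, (conv _ (hF1 x)).2 hx⟩
    · obtain ⟨x, hx⟩ := hGs _ hs1'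
      exact ⟨x, (conv _ (hG1 x)).2 hx⟩
    · intro a ha b hb
      have := h _ (by simpa using hs0) hs1' a b ((conv _ (hF1 a)).1 ha) ((conv _ (hG1 b)).1 hb)
      simp only [Set.mem_ofPred_eq]
      rw [← ENNReal.ofReal_le_iff_le_toReal (ne_top_of_le_ne_top ENNReal.one_ne_top (min_le_right _ _))]
      exact le_min this hs1'.le
  · have : ∀ K : ℝ → ENNReal, (∀ x, K x ≤ 1) → volume {x | s < (K x).toReal} = 0 := by
      intro K hK
      convert measure_empty (μ := (volume : Measure ℝ))
      ext x
      simp only [Set.mem_ofPred_eq, Set.mem_empty_iff_false, iff_false, not_lt]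
      have : (K x).toReal ≤ 1 := ENNReal.toReal_le_of_le_ofReal zero_le_one (by simpa using hK x)
      linarith
    rw [this F hF1, this G hG1]
    simp

theorem aux_core {F G H : ℝ → ENNReal} (hF : Measurable F) (hG : Measurable G) (hH : Measurable H)
    {a b c : ENNReal} (ha : ⨆ x, F x = a) (hb : ⨆ x, G x = b)
    (ha0 : a ≠ 0) (hat : a ≠ ⊤) (hb0 : b ≠ 0) (hbt : b ≠ ⊤) (hc0 : c ≠ 0) (hct : c ≠ ⊤)
    {w₁ w₂ : ℝ} (h1 : 0 < w₁) (h2 : 0 < w₂)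
    (h : ∀ s : ENNReal, s ≠ 0 → s < 1 → ∀ x y, s * a < F x → s * b < G y →
      s * c ≤ H (w₁ * x + w₂ * y)) :
    ENNReal.ofReal w₁ * ((∫⁻ x, F x) / a) + ENNReal.ofReal w₂ * ((∫⁻ x, G x) / b)
      ≤ (∫⁻ x, H x) / c := by
  have sup : ∀ (K : ℝ → ENNReal) (k : ENNReal), ⨆ x, K x = k → k ≠ 0 → k ≠ ⊤ →
      (∀ x, K x / k ≤ 1) ∧ (∀ s < 1, ∃ x, s < K x / k) := by
    intro K k hk hk0 hkt
    constructor
    · intro x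
      refine ENNReal.div_le_of_le_mul ?_
      rw [one_mul, ← hk]
      exact le_iSup K x
    · intro s hs
      have : s * k < ⨆ x, K x := by
        rw [hk]
        calc s * k < 1 * k := ENNReal.mul_lt_mul_left hk0 hkt hs
          _ = k := one_mul k
      obtain ⟨x, hx⟩ := lt_iSup_iff.1 this
      exact ⟨x, (ENNReal.lt_div_iff_mul_lt (Or.inl hk0) (Or.inl hkt)).2 hx⟩
  have := aux_L (F := fun x => F x / a) (G := fun x => G x / b) (H := fun x => H x / c)
    (hF.div_const _) (hG.div_const _) (hH.div_const _) (sup F a ha ha0 hat).1 (sup G b hb hb0 hbt).1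
    (sup F a ha ha0 hat).2 (sup G b hb hb0 hbt).2 h1 h2 (by
      intro s hs0 hs1 x y hx hy
      rw [ENNReal.lt_div_iff_mul_lt (Or.inl ha0) (Or.inl hat)] at hx
      rw [ENNReal.lt_div_iff_mul_lt (Or.inl hb0) (Or.inl hbt)] at hy
      rw [ENNReal.le_div_iff_mul_le (Or.inl hc0) (Or.inl hct)]
      exact h s hs0 hs1 x y hx hy)
  simp only [div_eq_mul_inv] at this ⊢
  rwa [lintegral_mul_const _ hF, lintegral_mul_const _ hG, lintegral_mul_const _ hH] at this

theorem aux_trunc {F : ℝ → ENNReal} (hF : Measurable F) :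
    Tendsto (fun N : ℕ => ∫⁻ x, min (F x) (N : ENNReal)) atTop (nhds (∫⁻ x, F x)) := by
  refine lintegral_tendsto_of_tendsto_of_monotone
    (fun n => (hF.min measurable_const).aemeasurable) ?_ ?_
  · refine Eventually.of_forall fun x m n hmn => ?_
    exact min_le_min le_rfl (by exact_mod_cast hmn)
  · refine Eventually.of_forall fun x => ?_
    have : Tendsto (fun n : ℕ => min (F x) (n : ENNReal)) atTop (nhds (min (F x) ⊤)) :=
      tendsto_const_nhds.min ENNReal.tendsto_nat_nhds_top
    simpa using this

theorem aux_amgm {w₁ w₂ : ℝ} (h1 : 0 < w₁) (h2 : 0 < w₂) (hw : w₁ + w₂ = 1) (I J : ENNReal) :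
    I ^ w₁ * J ^ w₂ ≤ ENNReal.ofReal w₁ * I + ENNReal.ofReal w₂ * J := by
  by_cases hI : I = ⊤
  · have : ENNReal.ofReal w₁ ≠ 0 := by simpa using h1
    simp [hI, ENNReal.mul_top this]
  by_cases hJ : J = ⊤
  · have : ENNReal.ofReal w₂ ≠ 0 := by simpa using h2
    simp [hJ, ENNReal.mul_top this]
  lift I to NNReal using hI
  lift J to NNReal using hJ
  have := NNReal.geom_mean_le_arith_mean2_weighted ⟨w₁, h1.le⟩ ⟨w₂, h2.le⟩ I J
    (by ext; exact hw)
  rw [← ENNReal.coe_rpow_of_nonneg _ h1.le, ← ENNReal.coe_rpow_of_nonneg _ h2.le,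
    ENNReal.ofReal_eq_coe_nnreal h1.le, ENNReal.ofReal_eq_coe_nnreal h2.le]
  exact_mod_cast this

theorem aux_pl1_bdd {F G H : ℝ → ENNReal} (hF : Measurable F) (hG : Measurable G)
    (hH : Measurable H) {M : ENNReal} (hM : M ≠ ⊤) (hFM : ∀ x, F x ≤ M) (hGM : ∀ x, G x ≤ M)
    {w₁ w₂ : ℝ} (h1 : 0 < w₁) (h2 : 0 < w₂) (hw : w₁ + w₂ = 1)
    (h : ∀ x y, F x ^ w₁ * G y ^ w₂ ≤ H (w₁ * x + w₂ * y)) :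
    (∫⁻ x, F x) ^ w₁ * (∫⁻ x, G x) ^ w₂ ≤ ∫⁻ x, H x := by
  obtain ⟨a, ha⟩ : ∃ a, ⨆ x, F x = a := ⟨_, rfl⟩
  obtain ⟨b, hb⟩ : ∃ a, ⨆ x, G x = a := ⟨_, rfl⟩
  by_cases ha0 : a = 0
  · have : ∀ x, F x = 0 := by
      rw [ha0] at ha
      simpa using ha
    simp [this, ENNReal.zero_rpow_of_pos h1]
  by_cases hb0 : b = 0
  · have : ∀ x, G x = 0 := by
      rw [hb0] at hb
      simpa using hb
    simp [this, ENNReal.zero_rpow_of_pos h2]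
  have hat : a ≠ ⊤ := ne_top_of_le_ne_top hM (ha ▸ iSup_le hFM)
  have hbt : b ≠ ⊤ := ne_top_of_le_ne_top hM (hb ▸ iSup_le hGM)
  have hc0 : a ^ w₁ * b ^ w₂ ≠ 0 := by
    refine mul_ne_zero ?_ ?_ <;> simp [*]
  have hct : a ^ w₁ * b ^ w₂ ≠ ⊤ :=
    ENNReal.mul_ne_top (ENNReal.rpow_ne_top_of_nonneg h1.le hat)
      (ENNReal.rpow_ne_top_of_nonneg h2.le hbt)
  have := aux_core hF hG hH ha hb ha0 hat hb0 hbt hc0 hct h1 h2 (by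
    intro s hs0 hs1 x y hx hy
    refine le_trans ?_ (h x y)
    calc s * (a ^ w₁ * b ^ w₂) = (s * a) ^ w₁ * (s * b) ^ w₂ := by
          rw [ENNReal.mul_rpow_of_nonneg _ _ h1.le, ENNReal.mul_rpow_of_nonneg _ _ h2.le]
          have : s = s ^ w₁ * s ^ w₂ := by
            rw [← ENNReal.rpow_add _ _ hs0 (ne_top_of_lt hs1), hw, ENNReal.rpow_one]
          nth_rewrite 1 [this]
          ring
      _ ≤ _ := mul_le_mul' (ENNReal.rpow_le_rpow hx.le h1.le) (ENNReal.rpow_le_rpow hy.le h2.le))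
  have h3 := (aux_amgm h1 h2 hw _ _).trans this
  rw [ENNReal.div_rpow_of_nonneg _ _ h1.le, ENNReal.div_rpow_of_nonneg _ _ h2.le,
    ENNReal.le_div_iff_mul_le (Or.inl hc0) (Or.inl hct)] at h3
  refine le_trans (le_of_eq ?_) h3
  have e1 : a ^ w₁ ≠ 0 := by simp [*]
  have e2 : b ^ w₂ ≠ 0 := by simp [*]
  have e3 := ENNReal.rpow_ne_top_of_nonneg h1.le hat
  have e4 := ENNReal.rpow_ne_top_of_nonneg h2.le hbt
  rw [mul_mul_mul_comm, ENNReal.div_mul_cancel e1 e3, ENNReal.div_mul_cancel e2 e4]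

/-- Prékopa–Leindler on the line. -/
theorem aux_pl1 {F G H : ℝ → ENNReal} (hF : Measurable F) (hG : Measurable G)
    (hH : Measurable H) 
    {w₁ w₂ : ℝ} (h1 : 0 < w₁) (h2 : 0 < w₂) (hw : w₁ + w₂ = 1)
    (h : ∀ x y, F x ^ w₁ * G y ^ w₂ ≤ H (w₁ * x + w₂ * y)) :
    (∫⁻ x, F x) ^ w₁ * (∫⁻ x, G x) ^ w₂ ≤ ∫⁻ x, H x := by
  by_cases hI : ∫⁻ x, F x = 0
  · simp [hI, ENNReal.zero_rpow_of_pos h1]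
  by_cases hJ : ∫⁻ x, G x = 0
  · simp [hJ, ENNReal.zero_rpow_of_pos h2]
  have lim : Tendsto (fun N : ℕ => (∫⁻ x, min (F x) (N : ENNReal)) ^ w₁ *
      (∫⁻ x, min (G x) (N : ENNReal)) ^ w₂) atTop
      (nhds ((∫⁻ x, F x) ^ w₁ * (∫⁻ x, G x) ^ w₂)) := by
    refine ENNReal.Tendsto.mul ((ENNReal.continuous_rpow_const.tendsto _).comp (aux_trunc hF))
      (Or.inl ?_) ((ENNReal.continuous_rpow_const.tendsto _).comp (aux_trunc hG)) (Or.inl ?_)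
    · simp only [ne_eq, ENNReal.rpow_eq_zero_iff, hI, not_or, not_and, not_lt]
      exact ⟨fun h => h.elim, fun _ => h1.le⟩
    · simp only [ne_eq, ENNReal.rpow_eq_zero_iff, hJ, not_or, not_and, not_lt]
      exact ⟨fun h => h.elim, fun _ => h2.le⟩
  refine le_of_tendsto' lim fun N => ?_
  refine aux_pl1_bdd (hF.min measurable_const) (hG.min measurable_const) hH
    (ENNReal.natCast_ne_top N) (fun x => min_le_right _ _) (fun x => min_le_right _ _) h1 h2 hw ?_
  intro x y
  exact le_trans (mul_le_mul' (ENNReal.rpow_le_rpow (min_le_left _ _) h1.le)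
    (ENNReal.rpow_le_rpow (min_le_left _ _) h2.le)) (h x y)

theorem aux_cons {n : ℕ} {F : (Fin (n+1) → ℝ) → ENNReal} (hF : Measurable F) :
    ∫⁻ x, F x = ∫⁻ r : ℝ, ∫⁻ w : Fin n → ℝ, F (Fin.cons r w) := by
  have mp := (volume_preserving_piFinSuccAbove (fun _ : Fin (n+1) => ℝ) 0).symm
  have := mp.lintegral_comp hF
  rw [← this]
  refine (lintegral_prod _ ?_).trans ?_
  · exact (hF.comp (MeasurableEquiv.measurable _)).aemeasurable
  · simp [MeasurableEquiv.piFinSuccAbove, Fin.insertNthEquiv]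

theorem aux_cons_meas {n : ℕ} {F : (Fin (n+1) → ℝ) → ENNReal} (hF : Measurable F) :
    Measurable (fun z : ℝ × (Fin n → ℝ) => F (Fin.cons z.1 z.2)) := by
  have := hF.comp (MeasurableEquiv.piFinSuccAbove (fun _ : Fin (n+1) => ℝ) 0).symm.measurable
  simpa [MeasurableEquiv.piFinSuccAbove, Fin.insertNthEquiv, Function.comp_def] using this

/-- Prékopa–Leindler. -/
theorem aux_pl {n : ℕ} {F G H : (Fin n → ℝ) → ENNReal} (hF : Measurable F) (hG : Measurable G)
    (hH : Measurable H) 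
    {w₁ w₂ : ℝ} (h1 : 0 < w₁) (h2 : 0 < w₂) (hw : w₁ + w₂ = 1)
    (h : ∀ x y, F x ^ w₁ * G y ^ w₂ ≤ H (w₁ • x + w₂ • y)) :
    (∫⁻ x, F x) ^ w₁ * (∫⁻ x, G x) ^ w₂ ≤ ∫⁻ x, H x := by
  induction n with
  | zero =>
    simp only [Measure.volume_pi_eq_dirac (default : Fin 0 → ℝ), lintegral_dirac]
    convert h _ _
  | succ n ih =>
    rw [aux_cons hF, aux_cons hG, aux_cons hH]
    refine aux_pl1 (aux_cons_meas hF).lintegral_prod_right' (aux_cons_meas hG).lintegral_prod_right'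
      (aux_cons_meas hH).lintegral_prod_right' h1 h2 hw ?_
    intro x y
    refine ih ((aux_cons_meas hF).comp measurable_prodMk_left)
      ((aux_cons_meas hG).comp measurable_prodMk_left)
      ((aux_cons_meas hH).comp measurable_prodMk_left) ?_
    intro u v
    convert h (Fin.cons x u) (Fin.cons y v) using 2
    ext i
    refine Fin.cases ?_ (fun j => ?_) i <;> simp

theorem aux_r1 {s α β x y w₁ w₂ : ℝ} (hs : 0 < s) (hα : 0 < α) (hβ : 0 < β) (hx : 0 < x)
    (hy : 0 < y) (h1 : 0 < w₁) (h2 : 0 < w₂) :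
    (w₁ * x + w₂ * y) ^ 2 * (s * ((w₁ / α + w₂ / β) ^ 2)⁻¹) ≤
      (x ^ 2 * (s * α ^ 2)) ^ (w₁ * x / (w₁ * x + w₂ * y)) *
      (y ^ 2 * (s * β ^ 2)) ^ (w₂ * y / (w₁ * x + w₂ * y)) := by
  set ρ := w₁ * x + w₂ * y with hρ
  have hρ0 : 0 < ρ := by positivity
  set θ := w₁ * x / ρ with hθ
  set η := w₂ * y / ρ with hη
  have hθ0 : 0 < θ := by positivity
  have hη0 : 0 < η := by positivity
  have hsum : θ + η = 1 := by rw [hθ, hη, ← add_div, ← hρ, div_self hρ0.ne']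
  set D := w₁ / α + w₂ / β with hD
  have hD0 : 0 < D := by positivity
  have am := Real.geom_mean_le_arith_mean2_weighted hθ0.le hη0.le
    (p₁ := (x * α)⁻¹) (p₂ := (y * β)⁻¹) (by positivity) (by positivity) hsum
  have e : θ * (x * α)⁻¹ + η * (y * β)⁻¹ = D / ρ := by
    rw [hθ, hη, hD]; field_simp
  rw [e, Real.inv_rpow (by positivity), Real.inv_rpow (by positivity), ← mul_inv] at am
  set Z := (x * α) ^ θ * (y * β) ^ η with hZ
  have hZ0 : 0 < Z := by positivity
  have hZ1 : ρ / D ≤ Z := by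
    rw [inv_le_comm₀ hZ0 (by positivity), inv_div] at am
    exact am
  have e2 : (x ^ 2 * (s * α ^ 2)) ^ θ * (y ^ 2 * (s * β ^ 2)) ^ η = s * Z ^ 2 := by
    have a1 : x ^ 2 * (s * α ^ 2) = s * ((x * α) * (x * α)) := by ring
    have a2 : y ^ 2 * (s * β ^ 2) = s * ((y * β) * (y * β)) := by ring
    have b : ∀ z : ℝ, 0 < z → ∀ k : ℝ, (s * (z * z)) ^ k = s ^ k * (z ^ k) ^ 2 := by
      intro z hz k
      rw [Real.mul_rpow hs.le (by positivity), Real.mul_rpow hz.le hz.le]; ring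
    rw [a1, a2, b _ (by positivity), b _ (by positivity)]
    have : s = s ^ θ * s ^ η := by rw [← Real.rpow_add hs, hsum, Real.rpow_one]
    rw [hZ]
    calc _ = (s ^ θ * s ^ η) * ((x * α) ^ θ * (y * β) ^ η) ^ 2 := by ring
      _ = _ := by rw [← this]
  rw [e2]
  have : ρ ^ 2 * (s * (D ^ 2)⁻¹) = s * (ρ / D) ^ 2 := by field_simp
  rw [this]
  gcongr

theorem aux_r2 {α β I J R w₁ w₂ : ℝ} (hα : 0 < α) (hβ : 0 < β) (hI : 0 < I)
    (hJ : 0 < J) (h1 : 0 < w₁) (h2 : 0 < w₂)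
    (h : w₁ * (I / α ^ 2) + w₂ * (J / β ^ 2) ≤ R / ((w₁ / α + w₂ / β) ^ 2)⁻¹) :
    R⁻¹ ≤ w₁ * I⁻¹ + w₂ * J⁻¹ := by
  set D := w₁ / α + w₂ / β with hD
  have hD0 : 0 < D := by positivity
  rw [div_inv_eq_mul] at h
  set S := w₁ * (I / α ^ 2) + w₂ * (J / β ^ 2) with hS
  have hS0 : 0 < S := by positivity
  have hR : 0 < R := by
    have : 0 < R * D ^ 2 := by linarith
    exact pos_of_mul_pos_left this (by positivity)
  set T := w₁ * I⁻¹ + w₂ * J⁻¹ with hT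
  have hT0 : 0 < T := by positivity
  have key : D ^ 2 ≤ S * T := by
    have : S * T - D ^ 2 = w₁ * w₂ * (I / α - J / β) ^ 2 / (I * J) := by
      rw [hS, hT, hD]; field_simp; ring
    have : 0 ≤ w₁ * w₂ * (I / α - J / β) ^ 2 / (I * J) := by positivity
    linarith
  rw [inv_le_iff_one_le_mul₀ hR]
  have h3 : D ^ 2 * 1 ≤ D ^ 2 * (T * R) := by nlinarith
  exact le_of_mul_le_mul_left h3 (by positivity)

theorem aux_ball_bdd {P Q R : ℝ → ENNReal} (hP : Measurable P) (hQ : Measurable Q)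
    (hR : Measurable R) {M : ENNReal} (hM : M ≠ ⊤) (hPM : ∀ x, P x ≤ M) (hQM : ∀ x, Q x ≤ M)
    (hP0 : ∀ x ≤ 0, P x = 0) (hQ0 : ∀ x ≤ 0, Q x = 0)
    {w₁ w₂ : ℝ} (h1 : 0 < w₁) (h2 : 0 < w₂)
    (h : ∀ x > 0, ∀ y > 0, (ENNReal.ofReal (x ^ 2) * P x) ^ (w₁ * x / (w₁ * x + w₂ * y)) *
      (ENNReal.ofReal (y ^ 2) * Q y) ^ (w₂ * y / (w₁ * x + w₂ * y)) ≤
      ENNReal.ofReal ((w₁ * x + w₂ * y) ^ 2) * R (w₁ * x + w₂ * y)) :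
    (∫⁻ x, R x)⁻¹ ≤ ENNReal.ofReal w₁ * (∫⁻ x, P x)⁻¹ + ENNReal.ofReal w₂ * (∫⁻ x, Q x)⁻¹ := by
  have hw1 : ENNReal.ofReal w₁ ≠ 0 := by simpa using h1
  have hw2 : ENNReal.ofReal w₂ ≠ 0 := by simpa using h2
  by_cases hI : ∫⁻ x, P x = 0
  · simp [hI, ENNReal.mul_top hw1]
  by_cases hJ : ∫⁻ x, Q x = 0
  · simp [hJ, ENNReal.mul_top hw2]
  by_cases hRt : ∫⁻ x, R x = ⊤
  · simp [hRt]
  obtain ⟨a, ha⟩ : ∃ a, ⨆ x, P x = a := ⟨_, rfl⟩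
  obtain ⟨b, hb⟩ : ∃ a, ⨆ x, Q x = a := ⟨_, rfl⟩
  have ha0 : a ≠ 0 := by
    rintro rfl
    have : ∀ x, P x = 0 := by simpa using ha
    exact hI (by simp [this])
  have hb0 : b ≠ 0 := by
    rintro rfl
    have : ∀ x, Q x = 0 := by simpa using hb
    exact hJ (by simp [this])
  have hat : a ≠ ⊤ := ne_top_of_le_ne_top hM (ha ▸ iSup_le hPM)
  have hbt : b ≠ ⊤ := ne_top_of_le_ne_top hM (hb ▸ iSup_le hQM)
  have sq : ∀ a : ENNReal, a ≠ 0 → a ≠ ⊤ → ∃ α : ℝ, 0 < α ∧ a = ENNReal.ofReal (α ^ 2) := by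
    intro a ha hat
    refine ⟨√a.toReal, Real.sqrt_pos.2 (ENNReal.toReal_pos ha hat), ?_⟩
    rw [Real.sq_sqrt ENNReal.toReal_nonneg, ENNReal.ofReal_toReal hat]
  obtain ⟨α, hα, rfl⟩ := sq a ha0 hat
  obtain ⟨β, hβ, rfl⟩ := sq b hb0 hbt
  have hD : 0 < ((w₁ / α + w₂ / β) ^ 2)⁻¹ := by positivity
  have hc0 : ENNReal.ofReal ((w₁ / α + w₂ / β) ^ 2)⁻¹ ≠ 0 := by
    simpa only [ne_eq, ENNReal.ofReal_eq_zero, not_le] using hD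
  have core := aux_core hP hQ hR ha hb ha0 hat hb0 hbt hc0 ENNReal.ofReal_ne_top h1 h2 (by
    intro s hs0 hs1 x y hx hy
    have hst : s ≠ ⊤ := ne_top_of_lt hs1
    have hx0 : 0 < x := by
      by_contra hx0
      rw [hP0 x (not_lt.1 hx0)] at hx
      exact not_lt_bot hx
    have hy0 : 0 < y := by
      by_contra hy0
      rw [hQ0 y (not_lt.1 hy0)] at hy
      exact not_lt_bot hy
    have hσ : 0 < s.toReal := ENNReal.toReal_pos hs0 hst
    rw [← ENNReal.ofReal_toReal hst] at hx hy ⊢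
    set σ := s.toReal
    have hρ : 0 < w₁ * x + w₂ * y := by positivity
    have hρ2 : ENNReal.ofReal ((w₁ * x + w₂ * y) ^ 2) ≠ 0 := by
      simp only [ne_eq, ENNReal.ofReal_eq_zero, not_le]; positivity
    refine (ENNReal.mul_le_mul_iff_right hρ2 ENNReal.ofReal_ne_top).1 (le_trans ?_ (h x hx0 y hy0))
    have hθ : 0 ≤ w₁ * x / (w₁ * x + w₂ * y) := by positivity
    have hη : 0 ≤ w₂ * y / (w₁ * x + w₂ * y) := by positivity
    refine le_trans ?_ (mul_le_mul' (ENNReal.rpow_le_rpow (mul_le_mul' le_rfl hx.le) hθ)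
      (ENNReal.rpow_le_rpow (mul_le_mul' le_rfl hy.le) hη))
    have r := aux_r1 hσ hα hβ hx0 hy0 h1 h2
    rw [← ENNReal.ofReal_mul hσ.le, ← ENNReal.ofReal_mul hσ.le, ← ENNReal.ofReal_mul hσ.le,
      ← ENNReal.ofReal_mul (by positivity), ← ENNReal.ofReal_mul (by positivity),
      ← ENNReal.ofReal_mul (by positivity), ENNReal.ofReal_rpow_of_nonneg (by positivity) hθ,
      ENNReal.ofReal_rpow_of_nonneg (by positivity) hη, ← ENNReal.ofReal_mul (by positivity)]
    exact ENNReal.ofReal_le_ofReal r)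
  have hRc : (∫⁻ x, R x) / ENNReal.ofReal ((w₁ / α + w₂ / β) ^ 2)⁻¹ ≠ ⊤ :=
    ENNReal.div_ne_top hRt hc0
  have hIt : ∫⁻ x, P x ≠ ⊤ := by
    intro hIt
    rw [hIt, ENNReal.top_div_of_ne_top hat, ENNReal.mul_top hw1, top_add, top_le_iff] at core
    exact hRc core
  have hJt : ∫⁻ x, Q x ≠ ⊤ := by
    intro hIt
    rw [hIt, ENNReal.top_div_of_ne_top hbt, ENNReal.mul_top hw2, add_top, top_le_iff] at core
    exact hRc core
  have hI' := ENNReal.toReal_pos hI hIt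
  have hJ' := ENNReal.toReal_pos hJ hJt
  rw [← ENNReal.ofReal_toReal hIt, ← ENNReal.ofReal_toReal hJt] at core ⊢
  rw [← ENNReal.ofReal_toReal hRt] at core ⊢
  set I := (∫⁻ x, P x).toReal
  set J := (∫⁻ x, Q x).toReal
  set S := (∫⁻ x, R x).toReal
  have hS0 : 0 ≤ S := ENNReal.toReal_nonneg
  rw [← ENNReal.ofReal_div_of_pos (by positivity), ← ENNReal.ofReal_div_of_pos (by positivity),
    ← ENNReal.ofReal_div_of_pos hD, ← ENNReal.ofReal_mul h1.le, ← ENNReal.ofReal_mul h2.le,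
    ← ENNReal.ofReal_add (by positivity) (by positivity),
    ENNReal.ofReal_le_ofReal_iff (by positivity)] at core
  have fin := aux_r2 hα hβ hI' hJ' h1 h2 core
  have hS : 0 < S := by
    rcases hS0.lt_or_eq with h | h
    · exact h
    · exfalso
      rw [← h, zero_div] at core
      have : 0 < w₁ * (I / α ^ 2) + w₂ * (J / β ^ 2) := by positivity
      linarith
  rw [← ENNReal.ofReal_inv_of_pos hS, ← ENNReal.ofReal_inv_of_pos hI',
    ← ENNReal.ofReal_inv_of_pos hJ', ← ENNReal.ofReal_mul h1.le, ← ENNReal.ofReal_mul h2.le,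
    ← ENNReal.ofReal_add (by positivity) (by positivity)]
  exact ENNReal.ofReal_le_ofReal fin

theorem aux_cov (A : ℝ → ENNReal) :
    ∫⁻ r in Set.Ioi (0:ℝ), A r =
      ∫⁻ x, (Set.Ioi (0:ℝ)).indicator (fun x => ENNReal.ofReal ((x ^ 2)⁻¹) * A x⁻¹) x := by
  have him : (fun x : ℝ => x⁻¹) '' Set.Ioi 0 = Set.Ioi 0 := by
    ext x
    constructor
    · rintro ⟨y, hy, rfl⟩
      exact inv_pos.2 (Set.mem_Ioi.1 hy)
    · intro hx
      exact ⟨x⁻¹, inv_pos.2 (Set.mem_Ioi.1 hx), inv_inv x⟩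
  have := lintegral_image_eq_lintegral_abs_deriv_mul (s := Set.Ioi (0:ℝ)) (f := fun x => x⁻¹)
    (f' := fun x => -(x ^ 2)⁻¹) measurableSet_Ioi
    (fun x hx => (hasDerivAt_inv (ne_of_gt hx)).hasDerivWithinAt)
    (fun x _ y _ h => inv_injective h) A
  rw [him] at this
  rw [this, lintegral_indicator measurableSet_Ioi]
  refine setLIntegral_congr_fun measurableSet_Ioi fun x _ => ?_
  simp only [abs_neg]
  rw [abs_of_nonneg (by positivity)]

theorem aux_ball {A B C : ℝ → ENNReal} (hA : Measurable A) (hB : Measurable B)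
    (hC : Measurable C) {w₁ w₂ : ℝ} (h1 : 0 < w₁) (h2 : 0 < w₂)
    (h : ∀ x > 0, ∀ y > 0, A x⁻¹ ^ (w₁ * x / (w₁ * x + w₂ * y)) *
      B y⁻¹ ^ (w₂ * y / (w₁ * x + w₂ * y)) ≤ C (w₁ * x + w₂ * y)⁻¹) :
    (∫⁻ r in Set.Ioi (0:ℝ), C r)⁻¹ ≤ ENNReal.ofReal w₁ * (∫⁻ r in Set.Ioi (0:ℝ), A r)⁻¹ +
      ENNReal.ofReal w₂ * (∫⁻ r in Set.Ioi (0:ℝ), B r)⁻¹ := by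
  rw [aux_cov A, aux_cov B, aux_cov C]
  have meas : ∀ K : ℝ → ENNReal, Measurable K → Measurable
      ((Set.Ioi (0:ℝ)).indicator (fun x => ENNReal.ofReal ((x ^ 2)⁻¹) * K x⁻¹)) := by
    intro K hK
    refine Measurable.indicator ?_ measurableSet_Ioi
    exact (Measurable.ennreal_ofReal (by fun_prop)).mul (hK.comp measurable_inv)
  have canc : ∀ (K : ℝ → ENNReal), ∀ x > 0, ENNReal.ofReal (x ^ 2) *
      (Set.Ioi (0:ℝ)).indicator (fun x => ENNReal.ofReal ((x ^ 2)⁻¹) * K x⁻¹) x = K x⁻¹ := by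
    intro K x hx
    rw [Set.indicator_of_mem (Set.mem_Ioi.2 hx), ← mul_assoc, ← ENNReal.ofReal_mul (by positivity),
      mul_inv_cancel₀ (by positivity)]
    simp
  have zero : ∀ (K : ℝ → ENNReal), ∀ x ≤ 0,
      (Set.Ioi (0:ℝ)).indicator (fun x => ENNReal.ofReal ((x ^ 2)⁻¹) * K x⁻¹) x = 0 := by
    intro K x hx
    exact Set.indicator_of_notMem (by simpa using hx) _
  have lim := (ENNReal.Tendsto.const_mul (a := ENNReal.ofReal w₁)
    (tendsto_inv_iff.2 (aux_trunc (meas A hA))) (Or.inr ENNReal.ofReal_ne_top)).add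
    (ENNReal.Tendsto.const_mul (a := ENNReal.ofReal w₂)
    (tendsto_inv_iff.2 (aux_trunc (meas B hB))) (Or.inr ENNReal.ofReal_ne_top))
  refine ge_of_tendsto' lim fun N => ?_
  refine aux_ball_bdd ((meas A hA).min measurable_const) ((meas B hB).min measurable_const)
    (meas C hC) (ENNReal.natCast_ne_top N) (fun x => min_le_right _ _) (fun x => min_le_right _ _)
    (fun x hx => by rw [zero A x hx]; simp) (fun x hx => by rw [zero B x hx]; simp) h1 h2 ?_
  intro x hx y hy
  rw [canc C _ (by positivity)]
  refine le_trans ?_ (h x hx y hy)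
  rw [← canc A x hx, ← canc B y hy]
  gcongr
  · exact min_le_left _ _
  · exact min_le_left _ _

theorem aux_half {n : ℕ} {F G K : (Fin (n+1) → ℝ) → ENNReal} (hF : Measurable F)
    (hG : Measurable G) (hK : Measurable K) {w₁ w₂ : ℝ} (h1 : 0 < w₁) (h2 : 0 < w₂)
    (hw : w₁ + w₂ = 1) (hF0 : ∀ x, x 0 ≤ 0 → F x = 0) (hG0 : ∀ x, x 0 ≤ 0 → G x = 0)
    (h : ∀ x y : Fin (n+1) → ℝ, 0 < x 0 → 0 < y 0 → ∀ θ η : ℝ, 0 < θ → 0 < η → θ + η = 1 →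
      θ * w₂ * x 0 = η * w₁ * y 0 → F x ^ θ * G y ^ η ≤ K (θ • x + η • y)) :
    (∫⁻ x, K x)⁻¹ ≤ ENNReal.ofReal w₁ * (∫⁻ x, F x)⁻¹ + ENNReal.ofReal w₂ * (∫⁻ x, G x)⁻¹ := by
  have half : ∀ F : (Fin (n+1) → ℝ) → ENNReal, Measurable F → (∀ x, x 0 ≤ 0 → F x = 0) →
      ∫⁻ x, F x = ∫⁻ r in Set.Ioi (0:ℝ), ∫⁻ w : Fin n → ℝ, F (Fin.cons r w) := by
    intro F hF hF0
    rw [aux_cons hF, ← lintegral_indicator measurableSet_Ioi]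
    refine lintegral_congr fun r => ?_
    by_cases hr : r ∈ Set.Ioi (0:ℝ)
    · rw [Set.indicator_of_mem hr]
    · rw [Set.indicator_of_notMem hr]
      have : ∀ w : Fin n → ℝ, F (Fin.cons r w) = 0 := fun w => hF0 _ (by simpa using hr)
      simp [this]
  have hKle : ∫⁻ r in Set.Ioi (0:ℝ), ∫⁻ w : Fin n → ℝ, K (Fin.cons r w) ≤ ∫⁻ x, K x := by
    rw [aux_cons hK]
    exact setLIntegral_le_lintegral _ _
  refine (ENNReal.inv_le_inv.2 hKle).trans ?_
  rw [half F hF hF0, half G hG hG0]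
  refine aux_ball (aux_cons_meas hF).lintegral_prod_right' (aux_cons_meas hG).lintegral_prod_right'
    (aux_cons_meas hK).lintegral_prod_right' h1 h2 ?_
  intro x hx y hy
  have hρ : 0 < w₁ * x + w₂ * y := by positivity
  have hs : w₁ * x / (w₁ * x + w₂ * y) + w₂ * y / (w₁ * x + w₂ * y) = 1 := by
    rw [← add_div, div_self hρ.ne']
  have hθ : 0 < w₁ * x / (w₁ * x + w₂ * y) := by positivity
  have hη : 0 < w₂ * y / (w₁ * x + w₂ * y) := by positivity
  refine aux_pl ((aux_cons_meas hF).comp measurable_prodMk_left)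
      ((aux_cons_meas hG).comp measurable_prodMk_left)
      ((aux_cons_meas hK).comp measurable_prodMk_left) hθ hη hs ?_
  intro u v
  refine le_of_le_of_eq (h (Fin.cons x⁻¹ u) (Fin.cons y⁻¹ v) (by simpa using hx) (by simpa using hy) _ _ hθ hη hs
    (by simp only [Fin.cons_zero]; field_simp)) (congrArg K ?_)
  ext i
  refine Fin.cases ?_ (fun j => ?_) i
  · simp only [Fin.cons_zero, Pi.add_apply, Pi.smul_apply, smul_eq_mul]
    field_simp
    linarith
  · simp

theorem aux_half_E {d : ℕ} {v : EuclideanSpace ℝ (Fin d)} (hv : v ≠ 0)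
    {F G K : EuclideanSpace ℝ (Fin d) → ENNReal} (hF : Measurable F)
    (hG : Measurable G) (hK : Measurable K) {w₁ w₂ : ℝ} (h1 : 0 < w₁) (h2 : 0 < w₂)
    (hw : w₁ + w₂ = 1) (hF0 : ∀ x, ⟪x, v⟫_ℝ ≤ 0 → F x = 0) (hG0 : ∀ x, ⟪x, v⟫_ℝ ≤ 0 → G x = 0)
    (h : ∀ x y : EuclideanSpace ℝ (Fin d), 0 < ⟪x, v⟫_ℝ → 0 < ⟪y, v⟫_ℝ → ∀ θ η : ℝ, 0 < θ →
      0 < η → θ + η = 1 →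
      θ * w₂ * ⟪x, v⟫_ℝ = η * w₁ * ⟪y, v⟫_ℝ → F x ^ θ * G y ^ η ≤ K (θ • x + η • y)) :
    (∫⁻ x, K x)⁻¹ ≤ ENNReal.ofReal w₁ * (∫⁻ x, F x)⁻¹ + ENNReal.ofReal w₂ * (∫⁻ x, G x)⁻¹ := by
  cases d with
  | zero => exact absurd (Subsingleton.elim v 0) hv
  | succ n =>
    have hvn : 0 < ‖v‖ := norm_pos_iff.2 hv
    obtain ⟨b, hb⟩ := Orthonormal.exists_orthonormalBasis_extension_of_card_eq (𝕜 := ℝ)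
      (E := EuclideanSpace ℝ (Fin (n+1))) (ι := Fin (n+1)) (by simp)
      (v := fun _ => ‖v‖⁻¹ • v) (s := {0}) (by
        constructor
        · intro i
          simp [norm_smul, hvn.ne']
        · intro i j hij
          exact absurd (Subsingleton.elim i j) hij)
    have hb0 : b 0 = ‖v‖⁻¹ • v := hb 0 rfl
    let T : EuclideanSpace ℝ (Fin (n+1)) ≃ᵐ (Fin (n+1) → ℝ) :=
      b.repr.toHomeomorph.toMeasurableEquiv.trans (MeasurableEquiv.toLp 2 (Fin (n+1) → ℝ)).symm
    have hT : MeasurePreserving T volume volume :=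
      b.measurePreserving_repr.trans (PiLp.volume_preserving_ofLp (Fin (n+1)))
    have hTs := hT.symm
    have Tlin : ∀ (θ η : ℝ) (x y : Fin (n+1) → ℝ),
        T.symm (θ • x + η • y) = θ • T.symm x + η • T.symm y := by
      intro θ η x y
      show b.repr.symm (WithLp.toLp 2 (θ • x + η • y)) = θ • b.repr.symm (WithLp.toLp 2 x) +
        η • b.repr.symm (WithLp.toLp 2 y)
      rw [WithLp.toLp_add, WithLp.toLp_smul, WithLp.toLp_smul, map_add, map_smul, map_smul]
    have Tv : ∀ x : Fin (n+1) → ℝ, ⟪T.symm x, v⟫_ℝ = ‖v‖ * x 0 := by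
      intro x
      have e : x 0 = ⟪b 0, T.symm x⟫_ℝ := by
        rw [← b.repr_apply_apply]
        show x 0 = b.repr (b.repr.symm (WithLp.toLp 2 x)) 0
        simp
      rw [e, hb0, real_inner_smul_left, ← mul_assoc, mul_inv_cancel₀ hvn.ne', one_mul,
        real_inner_comm]
    rw [← hTs.lintegral_comp hF, ← hTs.lintegral_comp hG, ← hTs.lintegral_comp hK]
    refine aux_half (hF.comp T.symm.measurable) (hG.comp T.symm.measurable)
      (hK.comp T.symm.measurable) h1 h2 hw ?_ ?_ ?_
    · intro x hx
      refine hF0 _ ?_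
      rw [Tv]
      exact mul_nonpos_of_nonneg_of_nonpos hvn.le hx
    · intro x hx
      refine hG0 _ ?_
      rw [Tv]
      exact mul_nonpos_of_nonneg_of_nonpos hvn.le hx
    · intro x y hx hy θ η hθ hη hs e
      simp only [Function.comp_apply, Tlin]
      refine h _ _ ?_ ?_ θ η hθ hη hs ?_
      · rw [Tv]; positivity
      · rw [Tv]; positivity
      · rw [Tv, Tv]
        linear_combination ‖v‖ * e

theorem aux_sym {d : ℕ} {v : EuclideanSpace ℝ (Fin d)} (hv : v ≠ 0)
    (φ : EuclideanSpace ℝ (Fin d) → ENNReal) (hφ : ∀ x, φ (-x) = φ x)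
    (S : Set (EuclideanSpace ℝ (Fin d))) (hSm : MeasurableSet S) (hS : ∀ x, -x ∈ S ↔ x ∈ S) :
    ∫⁻ x in S, φ x = 2 * ∫⁻ x in S ∩ {x | 0 < ⟪x, v⟫_ℝ}, φ x := by
  have hmp : MeasurableSet {x : EuclideanSpace ℝ (Fin d) | 0 < ⟪x, v⟫_ℝ} :=
    (isOpen_lt continuous_const (by fun_prop)).measurableSet
  have hmn : MeasurableSet {x : EuclideanSpace ℝ (Fin d) | ⟪x, v⟫_ℝ < 0} :=
    (isOpen_lt (by fun_prop) continuous_const).measurableSet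
  have hnull : volume {x : EuclideanSpace ℝ (Fin d) | ⟪x, v⟫_ℝ = 0} = 0 := by
    have := Measure.addHaar_submodule (volume : Measure (EuclideanSpace ℝ (Fin d)))
      (LinearMap.ker (innerₛₗ ℝ v)) (by
        intro h
        have : v ∈ LinearMap.ker (innerₛₗ ℝ v) := by rw [h]; trivial
        rw [LinearMap.mem_ker] at this
        exact hv (inner_self_eq_zero (𝕜 := ℝ).1 this))
    refine measure_mono_null ?_ this
    intro x hx
    simp only [SetLike.mem_coe, LinearMap.mem_ker]
    exact (real_inner_comm _ _).trans hx
  have hneg : ∫⁻ x in S ∩ {x | ⟪x, v⟫_ℝ < 0}, φ x = ∫⁻ x in S ∩ {x | 0 < ⟪x, v⟫_ℝ}, φ x := by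
    have := (Measure.measurePreserving_neg
      (volume : Measure (EuclideanSpace ℝ (Fin d)))).setLIntegral_comp_preimage_emb
      (MeasurableEquiv.neg _).measurableEmbedding φ (S ∩ {x | 0 < ⟪x, v⟫_ℝ})
    rw [← this]
    have hset : (Neg.neg ⁻¹' (S ∩ {x : EuclideanSpace ℝ (Fin d) | 0 < ⟪x, v⟫_ℝ})) =
        S ∩ {x | ⟪x, v⟫_ℝ < 0} := by
      ext x
      simp [hS, inner_neg_left]
    rw [hset]
    simp only [hφ]
  have hsplit : S =ᵐ[volume] ((S ∩ {x | 0 < ⟪x, v⟫_ℝ}) ∪ (S ∩ {x | ⟪x, v⟫_ℝ < 0}) :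
      Set (EuclideanSpace ℝ (Fin d))) := by
    have : ∀ᵐ x : EuclideanSpace ℝ (Fin d), ⟪x, v⟫_ℝ ≠ 0 := by
      rw [ae_iff]
      simpa using hnull
    filter_upwards [this] with x hx
    refine propext ?_
    show x ∈ S ↔ x ∈ (S ∩ {x | 0 < ⟪x, v⟫_ℝ}) ∪ (S ∩ {x | ⟪x, v⟫_ℝ < 0})
    simp only [Set.mem_union, Set.mem_inter_iff, Set.mem_ofPred_eq]
    rcases lt_or_gt_of_ne hx with h | h
    · simp [h, h.le, not_lt.2 h.le]
    · simp [h, h.le, not_lt.2 h.le]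
  rw [setLIntegral_congr hsplit, lintegral_union (hSm.inter hmn), hneg, two_mul]
  rw [Set.disjoint_left]
  rintro x ⟨_, hx⟩ ⟨_, hx'⟩
  exact lt_asymm (show 0 < ⟪x, v⟫_ℝ from hx) hx'

theorem aux_slab_meas {d : ℕ} (x : EuclideanSpace ℝ (Fin d)) :
    MeasurableSet {ξ : EuclideanSpace ℝ (Fin d) | |⟪ξ, x⟫_ℝ| ≤ 1} :=
  (isClosed_le (by fun_prop) continuous_const).measurableSet

theorem aux_pos {d : ℕ} (p : EuclideanSpace ℝ (Fin d) → ℝ)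
    (hp0 : ∀ ξ, 0 ≤ p ξ) (hpint : Integrable p)
    (hp1 : ∫ ξ, p ξ = 1)
    (hlogconcave : ∀ x y : EuclideanSpace ℝ (Fin d), ∀ t ∈ Set.Icc (0 : ℝ) 1,
      p x ^ (1 - t) * p y ^ t ≤ p ((1 - t) • x + t • y))
    (hsym : ∀ x, p (-x) = p x) (x : EuclideanSpace ℝ (Fin d)) :
    0 < ∫ ξ in {ξ : EuclideanSpace ℝ (Fin d) | |⟪ξ, x⟫_ℝ| ≤ 1}, p ξ := by
  have hp00 : ∀ ξ, 0 < p ξ → 0 < p 0 := by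
    intro ξ h
    have := hlogconcave ξ (-ξ) (1/2) (by norm_num)
    rw [hsym] at this
    have e : (1 - (1/2:ℝ)) • ξ + (1/2:ℝ) • (-ξ) = 0 := by
      rw [smul_neg]; norm_num
    rw [e] at this
    exact lt_of_lt_of_le (by positivity) this
  have hscale : ∀ ξ, 0 < p ξ → ∀ t ∈ Set.Icc (0:ℝ) 1, 0 < p (t • ξ) := by
    intro ξ h t ht
    have := hlogconcave 0 ξ t ht
    have h0 := hp00 ξ h
    rw [smul_zero, zero_add] at this
    exact lt_of_lt_of_le (by positivity) this
  rw [setIntegral_pos_iff_support_of_nonneg_ae (Eventually.of_forall hp0) hpint.integrableOn]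
  rw [pos_iff_ne_zero]
  intro hz
  have hsup : volume (Function.support p) = 0 := by
    have hsub : Function.support p ⊆ ⋃ n : ℕ, (fun ξ => ((n:ℝ) + 1)⁻¹ • ξ) ⁻¹'
        (Function.support p ∩ {ξ : EuclideanSpace ℝ (Fin d) | |⟪ξ, x⟫_ℝ| ≤ 1}) := by
      intro ξ hξ
      have hξ' : 0 < p ξ := lt_of_le_of_ne (hp0 ξ) (Ne.symm hξ)
      obtain ⟨n, hn⟩ := exists_nat_ge |⟪ξ, x⟫_ℝ|
      rw [Set.mem_iUnion]
      have hn1 : (0:ℝ) < (n:ℝ) + 1 := by positivity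
      refine ⟨n, ?_, ?_⟩
      · exact (hscale ξ hξ' _ ⟨by positivity, inv_le_one_of_one_le₀ (by linarith)⟩).ne'
      · show |⟪((n:ℝ) + 1)⁻¹ • ξ, x⟫_ℝ| ≤ 1
        rw [real_inner_smul_left, abs_mul, abs_of_pos (by positivity), inv_mul_le_iff₀ hn1]
        linarith
    refine measure_mono_null hsub (measure_iUnion_null fun n => ?_)
    have hn1 : ((n:ℝ) + 1)⁻¹ ≠ 0 := by positivity
    rw [Measure.addHaar_preimage_smul _ hn1, hz, mul_zero]
  have hzero : p =ᵐ[volume] 0 := by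
    rw [Filter.EventuallyEq, ae_iff]
    exact hsup
  rw [integral_congr_ae hzero] at hp1
  simp at hp1

theorem aux_half_ineq {d : ℕ} (p : EuclideanSpace ℝ (Fin d) → ℝ)
    (hp0 : ∀ ξ, 0 ≤ p ξ) (hpint : Integrable p)
    (hlogconcave : ∀ x y : EuclideanSpace ℝ (Fin d), ∀ t ∈ Set.Icc (0 : ℝ) 1,
      p x ^ (1 - t) * p y ^ t ≤ p ((1 - t) • x + t • y))
    (x y : EuclideanSpace ℝ (Fin d)) (hxy : y - x ≠ 0) {w₁ w₂ : ℝ} (h1 : 0 < w₁) (h2 : 0 < w₂)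
    (hw : w₁ + w₂ = 1) :
    (∫⁻ ξ in {ξ | |⟪ξ, w₁ • x + w₂ • y⟫_ℝ| ≤ 1} ∩ {ξ | 0 < ⟪ξ, y - x⟫_ℝ}, ENNReal.ofReal (p ξ))⁻¹ ≤
    ENNReal.ofReal w₁ *
      (∫⁻ ξ in {ξ | |⟪ξ, x⟫_ℝ| ≤ 1} ∩ {ξ | 0 < ⟪ξ, y - x⟫_ℝ}, ENNReal.ofReal (p ξ))⁻¹ +
    ENNReal.ofReal w₂ *
      (∫⁻ ξ in {ξ | |⟪ξ, y⟫_ℝ| ≤ 1} ∩ {ξ | 0 < ⟪ξ, y - x⟫_ℝ}, ENNReal.ofReal (p ξ))⁻¹ := by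
  classical
  set v := y - x with hv
  have hmp : MeasurableSet {x : EuclideanSpace ℝ (Fin d) | 0 < ⟪x, v⟫_ℝ} :=
    (isOpen_lt continuous_const (by fun_prop)).measurableSet
  obtain ⟨q, hq, hpq⟩ := hpint.aestronglyMeasurable.aemeasurable
  rw [Filter.EventuallyEq, ae_iff] at hpq
  obtain ⟨N, hN, hNm, hN0⟩ := exists_measurable_superset_of_null hpq
  have hNq : ∀ ξ, ξ ∉ N → q ξ = p ξ := by
    intro ξ hξ
    by_contra hne
    exact hξ (hN (fun h => hne h.symm))
  let f0 : EuclideanSpace ℝ (Fin d) → ENNReal := fun ξ => if ξ ∈ N then 0 else ENNReal.ofReal (q ξ)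
  let f1 : EuclideanSpace ℝ (Fin d) → ENNReal := fun ξ => if ξ ∈ N then ⊤ else ENNReal.ofReal (q ξ)
  have hf0 : Measurable f0 := Measurable.ite hNm measurable_const hq.ennreal_ofReal
  have hf1 : Measurable f1 := Measurable.ite hNm measurable_const hq.ennreal_ofReal
  have hNae : ∀ᵐ ξ, ξ ∉ N := by
    rw [ae_iff]; simpa using hN0
  have e0 : ∀ S : Set (EuclideanSpace ℝ (Fin d)), MeasurableSet S →
      ∫⁻ ξ in S, ENNReal.ofReal (p ξ) = ∫⁻ ξ, S.indicator f0 ξ := by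
    intro S hS
    rw [lintegral_indicator hS]
    refine lintegral_congr_ae (ae_restrict_of_ae ?_)
    filter_upwards [hNae] with ξ hξ
    simp [f0, hξ, hNq ξ hξ]
  have e1 : ∀ S : Set (EuclideanSpace ℝ (Fin d)), MeasurableSet S →
      ∫⁻ ξ in S, ENNReal.ofReal (p ξ) = ∫⁻ ξ, S.indicator f1 ξ := by
    intro S hS
    rw [lintegral_indicator hS]
    refine lintegral_congr_ae (ae_restrict_of_ae ?_)
    filter_upwards [hNae] with ξ hξ
    simp [f1, hξ, hNq ξ hξ]
  have m1 := (aux_slab_meas x).inter hmp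
  have m2 := (aux_slab_meas y).inter hmp
  have m3 := (aux_slab_meas (w₁ • x + w₂ • y)).inter hmp
  rw [e0 _ m1, e0 _ m2, e1 _ m3]
  refine aux_half_E hxy (hf0.indicator m1) (hf0.indicator m2) (hf1.indicator m3) h1 h2 hw ?_ ?_ ?_
  · intro ξ hξ
    exact Set.indicator_of_notMem (fun h => absurd h.2 (not_lt.2 hξ)) _
  · intro ξ hξ
    exact Set.indicator_of_notMem (fun h => absurd h.2 (not_lt.2 hξ)) _
  intro ξ ζ hξ hζ θ η hθ hη hs e
  by_cases hξS : |⟪ξ, x⟫_ℝ| ≤ 1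
  swap
  · rw [Set.indicator_of_notMem (fun h => hξS h.1), ENNReal.zero_rpow_of_pos hθ, zero_mul]
    exact bot_le
  by_cases hζS : |⟪ζ, y⟫_ℝ| ≤ 1
  swap
  · rw [Set.indicator_of_notMem (a := ζ) (fun h => hζS h.1), ENNReal.zero_rpow_of_pos hη, mul_zero]
    exact bot_le
  have k1 : ξ ∈ {ξ : EuclideanSpace ℝ (Fin d) | |⟪ξ, x⟫_ℝ| ≤ 1} ∩ {x | 0 < ⟪x, v⟫_ℝ} := ⟨hξS, hξ⟩
  have k2 : ζ ∈ {ξ : EuclideanSpace ℝ (Fin d) | |⟪ξ, y⟫_ℝ| ≤ 1} ∩ {x | 0 < ⟪x, v⟫_ℝ} := ⟨hζS, hζ⟩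
  rw [Set.indicator_of_mem k1, Set.indicator_of_mem k2, Set.indicator_of_mem]
  · by_cases hξN : ξ ∈ N
    · simp [f0, hξN, ENNReal.zero_rpow_of_pos hθ]
    by_cases hζN : ζ ∈ N
    · simp [f0, hζN, ENNReal.zero_rpow_of_pos hη]
    by_cases hm : θ • ξ + η • ζ ∈ N
    · simp [f1, hm]
    simp only [f0, f1, hξN, hζN, hm, if_false]
    rw [hNq _ hξN, hNq _ hζN, hNq _ hm, ENNReal.ofReal_rpow_of_nonneg (hp0 _) hθ.le,
      ENNReal.ofReal_rpow_of_nonneg (hp0 _) hη.le,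
      ← ENNReal.ofReal_mul (Real.rpow_nonneg (hp0 _) _)]
    refine ENNReal.ofReal_le_ofReal ?_
    have := hlogconcave ξ ζ η ⟨hη.le, by linarith⟩
    rwa [← eq_sub_of_add_eq hs] at this
  · constructor
    · show |⟪θ • ξ + η • ζ, w₁ • x + w₂ • y⟫_ℝ| ≤ 1
      have e2 : ⟪θ • ξ + η • ζ, w₁ • x + w₂ • y⟫_ℝ = θ * ⟪ξ, x⟫_ℝ + η * ⟪ζ, y⟫_ℝ := by
        rw [hv, inner_sub_right, inner_sub_right] at e
        simp only [inner_add_left, inner_add_right, real_inner_smul_left, real_inner_smul_right]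
        have hw1 : w₁ = 1 - w₂ := by linarith
        subst hw1
        linear_combination e
      rw [e2]
      rw [abs_le] at *
      constructor <;> nlinarith
    · show 0 < ⟪θ • ξ + η • ζ, v⟫_ℝ
      rw [inner_add_left, real_inner_smul_left, real_inner_smul_left]
      positivity

/-- Lemma 1 (Bobkov): for a symmetric log-concave density `p`, the slab probability
`f(x) = ∫_{|⟨ξ,x⟩| ≤ 1} p` is positive and `1/f` is convex. -/
theorem stmt_1 {d : ℕ} (p : EuclideanSpace ℝ (Fin d) → ℝ)
    (hp0 : ∀ ξ, 0 ≤ p ξ) (hpint : Integrable p)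
    (hp1 : ∫ ξ, p ξ = 1)
    (hlogconcave : ∀ x y : EuclideanSpace ℝ (Fin d), ∀ t ∈ Set.Icc (0 : ℝ) 1,
      p x ^ (1 - t) * p y ^ t ≤ p ((1 - t) • x + t • y))
    (hsym : ∀ x, p (-x) = p x) :
    (∀ x : EuclideanSpace ℝ (Fin d),
      0 < ∫ ξ in {ξ : EuclideanSpace ℝ (Fin d) | |⟪ξ, x⟫_ℝ| ≤ 1}, p ξ) ∧
    ConvexOn ℝ Set.univ (fun x : EuclideanSpace ℝ (Fin d) =>
      1 / ∫ ξ in {ξ : EuclideanSpace ℝ (Fin d) | |⟪ξ, x⟫_ℝ| ≤ 1}, p ξ) := by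
  have hpos := aux_pos p hp0 hpint hp1 hlogconcave hsym
  refine ⟨hpos, convex_univ, ?_⟩
  intro x _ y _ w₁ w₂ h1 h2 hw
  rcases h1.eq_or_lt with rfl | h1
  · have : w₂ = 1 := by linarith
    subst this
    simp
  rcases h2.eq_or_lt with rfl | h2
  · have : w₁ = 1 := by linarith
    subst this
    simp
  by_cases hxy : y - x = 0
  · have : y = x := sub_eq_zero.1 hxy
    subst this
    rw [← add_smul, ← add_smul, hw, one_smul, one_smul]
  have main := aux_half_ineq p hp0 hpint hlogconcave x y hxy h1 h2 hw
  have conv : ∀ z : EuclideanSpace ℝ (Fin d),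
      ENNReal.ofReal (∫ ξ in {ξ : EuclideanSpace ℝ (Fin d) | |⟪ξ, z⟫_ℝ| ≤ 1}, p ξ)⁻¹ =
      2⁻¹ * (∫⁻ ξ in {ξ | |⟪ξ, z⟫_ℝ| ≤ 1} ∩ {ξ | 0 < ⟪ξ, y - x⟫_ℝ}, ENNReal.ofReal (p ξ))⁻¹ := by
    intro z
    rw [ENNReal.ofReal_inv_of_pos (hpos z), ofReal_integral_eq_lintegral_ofReal
      hpint.integrableOn (Eventually.of_forall hp0),
      aux_sym hxy (fun ξ => ENNReal.ofReal (p ξ)) (fun ξ => by rw [hsym]) _ (aux_slab_meas z)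
      (fun ξ => by simp [inner_neg_left]), ENNReal.mul_inv (by simp) (by simp)]
  have hz := hpos (w₁ • x + w₂ • y)
  have hx := hpos x
  have hy := hpos y
  simp only [one_div, smul_eq_mul]
  rw [← ENNReal.ofReal_le_ofReal_iff (by positivity), ENNReal.ofReal_add (by positivity)
    (by positivity), ENNReal.ofReal_mul h1.le, ENNReal.ofReal_mul h2.le, conv, conv, conv]
  calc _ ≤ _ := mul_le_mul' le_rfl main
    _ = _ := by ring
end

section
/- Let K ⊆ ℝⁿ be a compact, convex, symmetric (K = −K) set with positive Lebesgue volume, and let ξ be uniformly distributed on K, so that f(x) := Vol({ξ ∈ K : |⟨ξ, x⟩| ≤ 1}) / Vol(K). Then f(x) > 0 for every x ∈ ℝⁿ and the function h(x) := 1/f(x) is convex on ℝⁿ. -/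
open MeasureTheory Filter
open scoped InnerProductSpace

theorem bm_one {a b : ℝ} (ha : 0 < a) (hb : 0 < b) {A B C : Set ℝ}
    (hA : MeasurableSet A) (hB : MeasurableSet B) (hAn : A.Nonempty) (hBn : B.Nonempty)
    (h : ∀ x ∈ A, ∀ y ∈ B, a * x + b * y ∈ C) :
    ENNReal.ofReal a * volume A + ENNReal.ofReal b * volume B ≤ volume C := by
  have key : ∀ K L : Set ℝ, K ⊆ A → L ⊆ B → IsCompact K → IsCompact L → K.Nonempty → L.Nonempty →
      ENNReal.ofReal a * volume K + ENNReal.ofReal b * volume L ≤ volume C := by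
    intro K L hKA hLB hK hL hKn hLn
    obtain ⟨k, hk, hkmax⟩ := hK.exists_isGreatest hKn
    obtain ⟨l, hl, hlmin⟩ := hL.exists_isLeast hLn
    set X : Set ℝ := (fun x => a * x + b * l) '' K with hX
    set Y : Set ℝ := (fun y => a * k + b * y) '' L with hY
    have hXc : IsCompact X := hK.image (by fun_prop)
    have hYc : IsCompact Y := hL.image (by fun_prop)
    have vX : volume X = ENNReal.ofReal a * volume K := by
      have : X = (fun z => z + b * l) '' ((fun z => a * z) '' K) := by
        rw [Set.image_image]
      rw [this, Set.image_add_right, measure_preimage_add_right]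
      have := Measure.addHaar_image_homothety (volume : Measure ℝ) 0 a K
      have h2 := Measure.addHaar_smul (volume : Measure ℝ) a K
      simp only [Module.finrank_self, pow_one, abs_of_pos ha] at h2
      rw [← h2]; rfl
    have vY : volume Y = ENNReal.ofReal b * volume L := by
      have : Y = (fun z => a * k + z) '' ((fun z => b * z) '' L) := by
        rw [Set.image_image]
      rw [this, Set.image_add_left, measure_preimage_add]
      have h2 := Measure.addHaar_smul (volume : Measure ℝ) b L
      simp only [Module.finrank_self, pow_one, abs_of_pos hb] at h2
      rw [← h2]; rfl
    have hsub : X ∪ Y ⊆ C := by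
      rintro z (⟨x, hx, rfl⟩ | ⟨y, hy, rfl⟩)
      · exact h _ (hKA hx) _ (hLB hl)
      · exact h _ (hKA hk) _ (hLB hy)
    have hint : X ∩ Y ⊆ {a * k + b * l} := by
      rintro z ⟨⟨x, hx, rfl⟩, ⟨y, hy, hxy⟩⟩
      have h1 := mul_le_mul_of_nonneg_left (hkmax hx) ha.le
      have h2 := mul_le_mul_of_nonneg_left (hlmin hy) hb.le
      simp only [Set.mem_singleton_iff] at *
      linarith
    have h0 : volume (X ∩ Y) = 0 := measure_mono_null hint (by simp)
    have := measure_union_add_inter (μ := (volume : Measure ℝ)) X hYc.measurableSet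
    rw [h0, add_zero, vX, vY] at this
    rw [← this]
    exact measure_mono hsub
  obtain ⟨x0, hx0⟩ := hAn
  obtain ⟨y0, hy0⟩ := hBn
  rw [hA.measure_eq_iSup_isCompact, hB.measure_eq_iSup_isCompact]
  simp only [ENNReal.mul_iSup]
  simp only [iSup_and']
  refine ENNReal.biSup_add_biSup_le' ⟨∅, by simp⟩ ⟨∅, by simp⟩ ?_
  rintro K ⟨hKA, hK⟩ L ⟨hLB, hL⟩
  refine le_trans ?_ (key (K ∪ {x0}) (L ∪ {y0}) ?_ ?_ (hK.union isCompact_singleton)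
    (hL.union isCompact_singleton) ⟨x0, by simp⟩ ⟨y0, by simp⟩)
  · gcongr <;> exact Set.subset_union_left
  · exact Set.union_subset hKA (by simpa using hx0)
  · exact Set.union_subset hLB (by simpa using hy0)

theorem layer {a b : ℝ} (ha : 0 < a) (hb : 0 < b) {u v w : ℝ → ℝ}
    (hu : Measurable u) (hv : Measurable v) (hw : Measurable w)
    (hu0 : ∀ x, 0 ≤ u x) (hv0 : ∀ x, 0 ≤ v x) (hw0 : ∀ x, 0 ≤ w x)
    (hu1 : ∀ x, u x ≤ 1) (hv1 : ∀ x, v x ≤ 1)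
    (hus : ∀ l < 1, ∃ x, l < u x) (hvs : ∀ l < 1, ∃ x, l < v x)
    (h : ∀ l, 0 < l → l < 1 → ∀ x y, l < u x → l < v y → l ≤ w (a * x + b * y)) :
    ENNReal.ofReal a * (∫⁻ x, ENNReal.ofReal (u x)) + ENNReal.ofReal b * (∫⁻ x, ENNReal.ofReal (v x))
      ≤ ∫⁻ x, ENNReal.ofReal (w x) := by
  rw [lintegral_eq_lintegral_meas_lt volume (Eventually.of_forall hu0) hu.aemeasurable,
    lintegral_eq_lintegral_meas_lt volume (Eventually.of_forall hv0) hv.aemeasurable,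
    lintegral_eq_lintegral_meas_le volume (Eventually.of_forall hw0) hw.aemeasurable]
  have m1 : Measurable fun l : ℝ => volume {x | l < u x} :=
    Antitone.measurable (fun l l' hl => measure_mono (fun x hx => lt_of_le_of_lt hl hx))
  have m2 : Measurable fun l : ℝ => volume {x | l < v x} :=
    Antitone.measurable (fun l l' hl => measure_mono (fun x hx => lt_of_le_of_lt hl hx))
  rw [← lintegral_const_mul _ m1, ← lintegral_const_mul _ m2, ← lintegral_add_left (m1.const_mul _)]
  apply lintegral_mono_ae
  filter_upwards [ae_restrict_mem measurableSet_Ioi] with l hl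
  rcases lt_or_ge l 1 with h1 | h1
  · exact bm_one ha hb (measurableSet_lt measurable_const hu) (measurableSet_lt measurable_const hv)
      (hus l h1) (hvs l h1) (fun x hx y hy => h l hl h1 x y hx hy)
  · have e1 : {x | l < u x} = ∅ := by
      ext x; simpa using (hu1 x).trans h1
    have e2 : {x | l < v x} = ∅ := by
      ext x; simpa using (hv1 x).trans h1
    rw [e1, e2]; simp

theorem mean_real {a b m A B c d : ℝ} (ha : 0 < a) (hb : 0 < b)
    (hm : 0 < m) (hA : 0 < A) (hB : 0 < B) (hc : 0 < c) (hd : 0 < d) :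
    ((a * A ^ (-(1/(m+1))) + b * B ^ (-(1/(m+1)))) ^ (-(m+1)) * (a * c + b * d)) ^ (-(1/m))
      ≤ a * (A * c) ^ (-(1/m)) + b * (B * d) ^ (-(1/m)) := by
  set u := (A * c) ^ (-(1/m)) with hu
  set v := (B * d) ^ (-(1/m)) with hv
  have hu0 : 0 < u := by positivity
  have hv0 : 0 < v := by positivity
  have e1 : ∀ {A c : ℝ}, 0 < A → 0 < c →
      A ^ (-(1/(m+1))) = ((A * c) ^ (-(1/m))) ^ (m/(m+1)) * c ^ (1/(m+1)) := by
    intro A c hA hc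
    rw [← Real.rpow_mul (by positivity), Real.mul_rpow hA.le hc.le, mul_assoc, ← Real.rpow_add hc]
    have : -(1/m) * (m/(m+1)) = -(1/(m+1)) := by field_simp
    rw [this]; simp
  rw [e1 hA hc, e1 hB hd]
  set U := a * u + b * v with hU
  set C := a * c + b * d with hC
  have hU0 : 0 < U := by positivity
  have hC0 : 0 < C := by positivity
  have amgm : ∀ {u c : ℝ}, 0 < u → 0 < c → u ^ (m/(m+1)) * c ^ (1/(m+1)) ≤
      (U ^ (m/(m+1)) * C ^ (1/(m+1))) * (m/(m+1) * (u/U) + 1/(m+1) * (c/C)) := by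
    intro u c hu hc
    have := Real.geom_mean_le_arith_mean2_weighted (w₁ := m/(m+1)) (w₂ := 1/(m+1))
      (p₁ := u/U) (p₂ := c/C) (by positivity) (by positivity) (by positivity) (by positivity)
      (by field_simp)
    rw [Real.div_rpow hu.le hU0.le, Real.div_rpow hc.le hC0.le] at this
    calc _ = (U ^ (m/(m+1)) * C ^ (1/(m+1))) * (u ^ (m/(m+1)) / U ^ (m/(m+1)) * (c ^ (1/(m+1)) / C ^ (1/(m+1)))) := by
          field_simp
      _ ≤ _ := by gcongr
  have hold : a * (u ^ (m/(m+1)) * c ^ (1/(m+1))) + b * (v ^ (m/(m+1)) * d ^ (1/(m+1))) ≤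
      U ^ (m/(m+1)) * C ^ (1/(m+1)) := by
    have h1 := mul_le_mul_of_nonneg_left (amgm hu0 hc) ha.le
    have h2 := mul_le_mul_of_nonneg_left (amgm hv0 hd) hb.le
    refine (add_le_add h1 h2).trans (le_of_eq ?_)
    have : m/(m+1) * ((a*u+b*v)/U) + 1/(m+1) * ((a*c+b*d)/C) = 1 := by
      rw [← hU, ← hC, div_self hU0.ne', div_self hC0.ne']; field_simp
    linear_combination (U ^ (m/(m+1)) * C ^ (1/(m+1))) * this
  have hpos : 0 < a * (u ^ (m/(m+1)) * c ^ (1/(m+1))) + b * (v ^ (m/(m+1)) * d ^ (1/(m+1))) := by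
    positivity
  have h3 := Real.rpow_le_rpow_of_nonpos hpos hold (z := -(m+1)) (by linarith)
  have h4 : (U ^ (m/(m+1)) * C ^ (1/(m+1))) ^ (-(m+1)) = U ^ (-m) * C⁻¹ := by
    rw [Real.mul_rpow (by positivity) (by positivity), ← Real.rpow_mul hU0.le, ← Real.rpow_mul hC0.le,
      ← Real.rpow_neg_one C]
    congr 2 <;> field_simp
  rw [h4] at h3
  have h5 : U ^ (-m) ≤ (a * (u ^ (m/(m+1)) * c ^ (1/(m+1))) + b * (v ^ (m/(m+1)) * d ^ (1/(m+1)))) ^ (-(m+1)) * C := by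
    have := mul_le_mul_of_nonneg_right h3 hC0.le
    rwa [mul_assoc, inv_mul_cancel₀ hC0.ne', mul_one] at this
  have h6 := Real.rpow_le_rpow_of_nonpos (by positivity) h5 (z := -(1/m)) (by
    have : 0 < 1/m := by positivity
    linarith)
  refine h6.trans (le_of_eq ?_)
  rw [← Real.rpow_mul hU0.le]
  have : -m * -(1/m) = 1 := by field_simp
  rw [this, Real.rpow_one]

open scoped ENNReal

theorem er_iff {x y : ℝ≥0∞} {z : ℝ} (hz : z < 0) : x ^ z ≤ y ^ z ↔ y ≤ x := by
  obtain ⟨w, rfl⟩ : ∃ w, z = -w := ⟨-z, by ring⟩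
  rw [ENNReal.rpow_neg, ENNReal.rpow_neg, ENNReal.inv_le_inv, ENNReal.rpow_le_rpow_iff (by linarith)]

theorem bbl_one_bdd {a b m : ℝ} (ha : 0 < a) (hb : 0 < b) (hm : 0 < m) {f g h : ℝ → ℝ≥0∞}
    (hf : Measurable f) (hg : Measurable g) (hh : Measurable h)
    (hfb : ⨆ x, f x ≠ ∞) (hgb : ⨆ x, g x ≠ ∞)
    (H : ∀ x y, h (a * x + b * y) ^ (-(1/(m+1))) ≤
      ENNReal.ofReal a * f x ^ (-(1/(m+1))) + ENNReal.ofReal b * g y ^ (-(1/(m+1)))) :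
    (∫⁻ x, h x) ^ (-(1/m)) ≤
      ENNReal.ofReal a * (∫⁻ x, f x) ^ (-(1/m)) + ENNReal.ofReal b * (∫⁻ x, g x) ^ (-(1/m)) := by
  have hm' : -(1/m) < 0 := by
    have : 0 < 1/m := by positivity
    linarith
  have hm1 : -(1/(m+1)) < 0 := by
    have : 0 < 1/(m+1) := by positivity
    linarith
  have ha' : ENNReal.ofReal a ≠ 0 := by simpa using ha
  have hb' : ENNReal.ofReal b ≠ 0 := by simpa using hb
  by_cases hF0 : ∫⁻ x, f x = 0
  · rw [hF0, ENNReal.zero_rpow_of_neg hm', ENNReal.mul_top ha']; simp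
  by_cases hG0 : ∫⁻ x, g x = 0
  · rw [hG0, ENNReal.zero_rpow_of_neg hm', ENNReal.mul_top hb']; simp
  set A := (⨆ x, f x).toReal with hA
  set B := (⨆ x, g x).toReal with hB
  have eA : ENNReal.ofReal A = ⨆ x, f x := ENNReal.ofReal_toReal hfb
  have eB : ENNReal.ofReal B = ⨆ x, g x := ENNReal.ofReal_toReal hgb
  have hA0 : 0 < A := by
    refine ENNReal.toReal_pos ?_ hfb
    intro h0
    apply hF0
    have : ∀ x, f x = 0 := by simpa using h0
    simp [this]
  have hB0 : 0 < B := by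
    refine ENNReal.toReal_pos ?_ hgb
    intro h0
    apply hG0
    have : ∀ x, g x = 0 := by simpa using h0
    simp [this]
  have ff : ∀ x, f x ≠ ∞ := fun x => ne_top_of_le_ne_top hfb (le_iSup f x)
  have gf : ∀ x, g x ≠ ∞ := fun x => ne_top_of_le_ne_top hgb (le_iSup g x)
  set S := a * A ^ (-(1/(m+1))) + b * B ^ (-(1/(m+1))) with hS
  have hS0 : 0 < S := by positivity
  set D := S ^ (-(m+1)) with hD
  have hD0 : 0 < D := by positivity
  have hDS : D ^ (-(1/(m+1))) = S := by
    rw [hD, ← Real.rpow_mul hS0.le]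
    have : -(m+1) * -(1/(m+1)) = 1 := by field_simp
    rw [this, Real.rpow_one]
  set c := ∫⁻ x, ENNReal.ofReal ((f x).toReal / A) with hc
  set d := ∫⁻ x, ENNReal.ofReal ((g x).toReal / B) with hd
  have ec : ∫⁻ x, f x = ENNReal.ofReal A * c := by
    rw [hc, ← lintegral_const_mul _ (by fun_prop)]
    congr 1; ext x
    rw [← ENNReal.ofReal_mul hA0.le, mul_div_cancel₀ _ hA0.ne', ENNReal.ofReal_toReal (ff x)]
  have ed : ∫⁻ x, g x = ENNReal.ofReal B * d := by
    rw [hd, ← lintegral_const_mul _ (by fun_prop)]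
    congr 1; ext x
    rw [← ENNReal.ofReal_mul hB0.le, mul_div_cancel₀ _ hB0.ne', ENNReal.ofReal_toReal (gf x)]
  have main : ENNReal.ofReal D * (ENNReal.ofReal a * c + ENNReal.ofReal b * d) ≤ ∫⁻ x, h x := by
    have hl := layer ha hb (u := fun x => (f x).toReal / A) (v := fun x => (g x).toReal / B)
      (w := fun x => (min (h x) (ENNReal.ofReal D)).toReal / D) (by fun_prop) (by fun_prop)
      (by fun_prop) (fun x => by positivity) (fun x => by positivity) (fun x => by positivity)
      (fun x => by
        rw [div_le_one hA0]; exact ENNReal.toReal_mono hfb (le_iSup f x))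
      (fun x => by
        rw [div_le_one hB0]; exact ENNReal.toReal_mono hgb (le_iSup g x))
      (fun l hl => by
        have : ENNReal.ofReal (l * A) < ⨆ x, f x := by
          rw [← eA]; exact (ENNReal.ofReal_lt_ofReal_iff hA0).2 (by nlinarith)
        obtain ⟨x, hx⟩ := lt_iSup_iff.1 this
        refine ⟨x, ?_⟩
        rw [lt_div_iff₀ hA0]
        by_contra hcon
        refine absurd hx (not_lt.2 ?_)
        rw [ENNReal.le_ofReal_iff_toReal_le (ff x) (le_trans ENNReal.toReal_nonneg (not_lt.1 hcon))]
        exact not_lt.1 hcon)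
      (fun l hl => by
        have : ENNReal.ofReal (l * B) < ⨆ x, g x := by
          rw [← eB]; exact (ENNReal.ofReal_lt_ofReal_iff hB0).2 (by nlinarith)
        obtain ⟨x, hx⟩ := lt_iSup_iff.1 this
        refine ⟨x, ?_⟩
        rw [lt_div_iff₀ hB0]
        by_contra hcon
        refine absurd hx (not_lt.2 ?_)
        rw [ENNReal.le_ofReal_iff_toReal_le (gf x) (le_trans ENNReal.toReal_nonneg (not_lt.1 hcon))]
        exact not_lt.1 hcon)
      (by
        intro l hl0 hl1 x y hx hy
        rw [lt_div_iff₀ hA0] at hx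
        rw [lt_div_iff₀ hB0] at hy
        have hx' : ENNReal.ofReal (l * A) ≤ f x := ENNReal.ofReal_le_of_le_toReal hx.le
        have hy' : ENNReal.ofReal (l * B) ≤ g y := ENNReal.ofReal_le_of_le_toReal hy.le
        have hh' : ENNReal.ofReal (l * D) ≤ h (a * x + b * y) := by
          rw [← er_iff (z := -(1/(m+1))) hm1]
          refine (H x y).trans ?_
          calc _ ≤ ENNReal.ofReal a * ENNReal.ofReal (l * A) ^ (-(1/(m+1))) +
                ENNReal.ofReal b * ENNReal.ofReal (l * B) ^ (-(1/(m+1))) := by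
                exact add_le_add (mul_le_mul' le_rfl ((er_iff hm1).2 hx'))
                  (mul_le_mul' le_rfl ((er_iff hm1).2 hy'))
            _ = _ := by
                rw [ENNReal.ofReal_rpow_of_pos (by positivity), ENNReal.ofReal_rpow_of_pos (by positivity),
                  ENNReal.ofReal_rpow_of_pos (by positivity), ← ENNReal.ofReal_mul ha.le,
                  ← ENNReal.ofReal_mul hb.le, ← ENNReal.ofReal_add (by positivity) (by positivity)]
                rw [Real.mul_rpow hl0.le hA0.le, Real.mul_rpow hl0.le hB0.le,
                  Real.mul_rpow hl0.le hD0.le, hDS, hS]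
                congr 1; ring
        rw [le_div_iff₀ hD0]
        have h2 : ENNReal.ofReal (l * D) ≤ min (h (a * x + b * y)) (ENNReal.ofReal D) :=
          le_min hh' (ENNReal.ofReal_le_ofReal (by nlinarith))
        exact (ENNReal.ofReal_le_iff_le_toReal (by simp)).1 h2)
    calc _ ≤ ENNReal.ofReal D * ∫⁻ x, ENNReal.ofReal ((min (h x) (ENNReal.ofReal D)).toReal / D) := by
          gcongr
      _ = ∫⁻ x, min (h x) (ENNReal.ofReal D) := by
          rw [← lintegral_const_mul _ (by fun_prop)]
          congr 1; ext x
          rw [← ENNReal.ofReal_mul hD0.le, mul_div_cancel₀ _ hD0.ne', ENNReal.ofReal_toReal (by simp)]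
      _ ≤ _ := lintegral_mono fun x => min_le_left _ _
  have hc0 : c ≠ 0 := by rintro h0; rw [ec, h0] at hF0; simp at hF0
  have hd0 : d ≠ 0 := by rintro h0; rw [ed, h0] at hG0; simp at hG0
  have hD0' : ENNReal.ofReal D ≠ 0 := by simpa using hD0
  by_cases hct : c = ∞
  · rw [hct, ENNReal.mul_top ha', top_add, ENNReal.mul_top hD0', top_le_iff] at main
    rw [main, ENNReal.top_rpow_of_neg hm']; simp
  by_cases hdt : d = ∞
  · rw [hdt, ENNReal.mul_top hb', add_top, ENNReal.mul_top hD0', top_le_iff] at main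
    rw [main, ENNReal.top_rpow_of_neg hm']; simp
  refine ((er_iff hm').2 main).trans ?_
  rw [ec, ed]
  have hc1 := ENNReal.toReal_pos hc0 hct
  have hd1 := ENNReal.toReal_pos hd0 hdt
  rw [← ENNReal.ofReal_toReal hct, ← ENNReal.ofReal_toReal hdt]
  rw [← ENNReal.ofReal_mul ha.le, ← ENNReal.ofReal_mul hb.le,
    ← ENNReal.ofReal_add (by positivity) (by positivity), ← ENNReal.ofReal_mul (by positivity),
    ← ENNReal.ofReal_mul (by positivity), ← ENNReal.ofReal_mul (by positivity),
    ENNReal.ofReal_rpow_of_pos (by positivity), ENNReal.ofReal_rpow_of_pos (by positivity),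
    ENNReal.ofReal_rpow_of_pos (by positivity), ← ENNReal.ofReal_mul ha.le, ← ENNReal.ofReal_mul hb.le,
    ← ENNReal.ofReal_add (by positivity) (by positivity)]
  exact ENNReal.ofReal_le_ofReal (mean_real ha hb hm hA0 hB0 hc1 hd1)

theorem bbl_one {a b m : ℝ} (ha : 0 < a) (hb : 0 < b) (hm : 0 < m) {f g h : ℝ → ℝ≥0∞}
    (hf : Measurable f) (hg : Measurable g) (hh : Measurable h)
    (H : ∀ x y, h (a * x + b * y) ^ (-(1/(m+1))) ≤
      ENNReal.ofReal a * f x ^ (-(1/(m+1))) + ENNReal.ofReal b * g y ^ (-(1/(m+1)))) :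
    (∫⁻ x, h x) ^ (-(1/m)) ≤
      ENNReal.ofReal a * (∫⁻ x, f x) ^ (-(1/m)) + ENNReal.ofReal b * (∫⁻ x, g x) ^ (-(1/m)) := by
  have hm1 : -(1/(m+1)) < 0 := by
    have : 0 < 1/(m+1) := by positivity
    linarith
  have bd : ∀ N : ℕ, (∫⁻ x, h x) ^ (-(1/m)) ≤
      ENNReal.ofReal a * (∫⁻ x, min (f x) N) ^ (-(1/m)) +
      ENNReal.ofReal b * (∫⁻ x, min (g x) N) ^ (-(1/m)) := by
    intro N
    refine bbl_one_bdd ha hb hm (by fun_prop) (by fun_prop) hh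
      (ne_top_of_le_ne_top (ENNReal.natCast_ne_top N) (iSup_le fun x => min_le_right _ _))
      (ne_top_of_le_ne_top (ENNReal.natCast_ne_top N) (iSup_le fun x => min_le_right _ _)) ?_
    intro x y
    refine (H x y).trans ?_
    exact add_le_add (mul_le_mul' le_rfl ((er_iff hm1).2 (min_le_left _ _)))
      (mul_le_mul' le_rfl ((er_iff hm1).2 (min_le_left _ _)))
  have lim : ∀ f : ℝ → ℝ≥0∞, Measurable f →
      Tendsto (fun N : ℕ => ∫⁻ x, min (f x) N) atTop (nhds (∫⁻ x, f x)) := by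
    intro f hf
    refine lintegral_tendsto_of_tendsto_of_monotone (fun N => by fun_prop)
      (Eventually.of_forall fun x => ?_) (Eventually.of_forall fun x => ?_)
    · intro N M hNM
      exact min_le_min le_rfl (by exact_mod_cast hNM)
    · have := (tendsto_const_nhds (x := f x)).min ENNReal.tendsto_nat_nhds_top
      simpa using this
  refine ge_of_tendsto' (Tendsto.add
    (ENNReal.Tendsto.const_mul ((ENNReal.continuous_rpow_const.tendsto _).comp (lim f hf))
      (Or.inr (by simp)))
    (ENNReal.Tendsto.const_mul ((ENNReal.continuous_rpow_const.tendsto _).comp (lim g hg))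
      (Or.inr (by simp)))) bd

theorem bbl_pi {a b : ℝ} (ha : 0 < a) (hb : 0 < b) (n : ℕ) : ∀ {m : ℝ} (_ : 0 < m)
    {f g h : (Fin n → ℝ) → ℝ≥0∞}
    (_ : Measurable f) (_ : Measurable g) (_ : Measurable h)
    (_ : ∀ x y, h (a • x + b • y) ^ (-(1/(m+n))) ≤
      ENNReal.ofReal a * f x ^ (-(1/(m+n))) + ENNReal.ofReal b * g y ^ (-(1/(m+n)))),
    (∫⁻ x, h x) ^ (-(1/m)) ≤
      ENNReal.ofReal a * (∫⁻ x, f x) ^ (-(1/m)) + ENNReal.ofReal b * (∫⁻ x, g x) ^ (-(1/m)) := by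
  induction n with
  | zero =>
    intro m hm f g h hf hg hh H
    have := H (@default _ Unique.instInhabited) (@default _ Unique.instInhabited)
    rw [Subsingleton.elim (a • _ + b • _ : Fin 0 → ℝ) (@default _ Unique.instInhabited)] at this
    have v1 : volume (Set.univ : Set (Fin 0 → ℝ)) = 1 := by
      rw [volume_pi, Measure.pi_of_empty]; simp
    simp only [lintegral_unique, v1, mul_one]
    rw [Nat.cast_zero, add_zero] at this
    exact this
  | succ n ih =>
    intro m hm f g h hf hg hh H
    have fub : ∀ f : (Fin (n+1) → ℝ) → ℝ≥0∞, Measurable f →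
        ∫⁻ x, f x = ∫⁻ s : ℝ, ∫⁻ w : Fin n → ℝ, f (Fin.cons s w) := by
      intro f hf
      have mp := (volume_preserving_piFinSuccAbove (fun _ : Fin (n+1) => ℝ) 0).symm
      rw [← mp.lintegral_comp hf, Measure.volume_eq_prod, lintegral_prod]
      · refine lintegral_congr fun s => lintegral_congr fun w => ?_
        congr 1
        ext i; refine Fin.cases ?_ (fun j => ?_) i <;> simp [MeasurableEquiv.piFinSuccAbove]
      · exact (hf.comp mp.measurable).aemeasurable
    have mcons : Measurable fun p : ℝ × (Fin n → ℝ) => (Fin.cons p.1 p.2 : Fin (n+1) → ℝ) := by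
      refine measurable_pi_lambda _ fun i => ?_
      refine Fin.cases ?_ (fun j => ?_) i
      · simpa using measurable_fst
      · simp only [Fin.cons_succ]; fun_prop
    rw [fub f hf, fub g hg, fub h hh]
    refine bbl_one ha hb hm ?_ ?_ ?_ ?_
    · exact (hf.comp mcons).lintegral_prod_right'
    · exact (hg.comp mcons).lintegral_prod_right'
    · exact (hh.comp mcons).lintegral_prod_right'
    · intro x y
      refine ih (m := m+1) (by positivity) (hf.comp (mcons.comp measurable_prodMk_left))
        (hg.comp (mcons.comp measurable_prodMk_left))
        (hh.comp (mcons.comp measurable_prodMk_left)) ?_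
      intro v w
      have := H (Fin.cons x v) (Fin.cons y w)
      have e : a • (Fin.cons x v : Fin (n+1) → ℝ) + b • (Fin.cons y w : Fin (n+1) → ℝ) =
          Fin.cons (a * x + b * y) (a • v + b • w) := by
        ext i; refine Fin.cases ?_ (fun j => ?_) i <;> simp
      rw [e] at this
      have e2 : m + ((n+1 : ℕ) : ℝ) = m + 1 + n := by push_cast; ring
      rw [e2] at this
      exact this

theorem bbl_euclid {a b : ℝ} (ha : 0 < a) (hb : 0 < b) (n : ℕ)
    {f g h : EuclideanSpace ℝ (Fin n) → ℝ≥0∞}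
    (hf : Measurable f) (hg : Measurable g) (hh : Measurable h)
    (H : ∀ x y, h (a • x + b • y) ^ (-(1/(1+n : ℝ))) ≤
      ENNReal.ofReal a * f x ^ (-(1/(1+n : ℝ))) + ENNReal.ofReal b * g y ^ (-(1/(1+n : ℝ)))) :
    (∫⁻ x, h x)⁻¹ ≤
      ENNReal.ofReal a * (∫⁻ x, f x)⁻¹ + ENNReal.ofReal b * (∫⁻ x, g x)⁻¹ := by
  have mp := PiLp.volume_preserving_toLp (Fin n)
  rw [← mp.lintegral_comp hf, ← mp.lintegral_comp hg, ← mp.lintegral_comp hh]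
  have := bbl_pi ha hb n (m := 1) one_pos (hf.comp mp.measurable) (hg.comp mp.measurable)
    (hh.comp mp.measurable) (fun x y => H (WithLp.toLp 2 x) (WithLp.toLp 2 y))
  simpa [ENNReal.rpow_neg_one] using this

noncomputable section

/-- The projective involution. -/
def proj {n : ℕ} (l : EuclideanSpace ℝ (Fin n) →L[ℝ] ℝ) (e p : EuclideanSpace ℝ (Fin n)) :
    EuclideanSpace ℝ (Fin n) := (l p)⁻¹ • (p + e) - e

/-- The transported density. -/
def dens {n : ℕ} (l : EuclideanSpace ℝ (Fin n) →L[ℝ] ℝ) (e : EuclideanSpace ℝ (Fin n))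
    (T : Set (EuclideanSpace ℝ (Fin n))) : EuclideanSpace ℝ (Fin n) → ℝ≥0∞ :=
  Set.indicator {p | 0 < l p ∧ proj l e p ∈ T} (fun p => ENNReal.ofReal (((l p)⁻¹) ^ (n+1)))

end

section
variable {n : ℕ} {l : EuclideanSpace ℝ (Fin n) →L[ℝ] ℝ} {e : EuclideanSpace ℝ (Fin n)}

theorem l_proj (he : l e = 1) {p : EuclideanSpace ℝ (Fin n)} (hp : 0 < l p) :
    l (proj l e p) = (l p)⁻¹ := by
  simp only [proj, map_sub, map_smul, map_add, he, smul_eq_mul]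
  field_simp; ring

theorem proj_proj (he : l e = 1) {p : EuclideanSpace ℝ (Fin n)} (hp : 0 < l p) :
    proj l e (proj l e p) = p := by
  have : proj l e (proj l e p) = (l (proj l e p))⁻¹ • (proj l e p + e) - e := rfl
  rw [this, l_proj he hp]
  simp only [proj, sub_add_cancel, smul_smul, inv_inv, mul_inv_cancel₀ hp.ne', one_smul,
    add_sub_cancel_right]

theorem measurable_proj : Measurable (proj l e) := by
  unfold proj
  have := l.measurable
  fun_prop

theorem measurableSet_dom {T : Set (EuclideanSpace ℝ (Fin n))} (hT : MeasurableSet T) :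
    MeasurableSet {p | 0 < l p ∧ proj l e p ∈ T} :=
  (measurableSet_lt measurable_const l.measurable).inter (measurable_proj hT)

theorem measurable_dens {T : Set (EuclideanSpace ℝ (Fin n))} (hT : MeasurableSet T) :
    Measurable (dens l e T) := by
  refine Measurable.indicator ?_ (measurableSet_dom hT)
  have := l.measurable
  fun_prop

theorem lintegral_dens (he : l e = 1) {T : Set (EuclideanSpace ℝ (Fin n))} (hT : MeasurableSet T) :
    ∫⁻ p, dens l e T p = volume (T ∩ {p | 0 < l p}) := by
  have hP := measurableSet_dom (l := l) (e := e) hT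
  unfold dens
  rw [lintegral_indicator hP]
  set P := {p | 0 < l p ∧ proj l e p ∈ T} with hPd
  have him : proj l e '' P = T ∩ {p | 0 < l p} := by
    ext q
    constructor
    · rintro ⟨p, ⟨hp, hpT⟩, rfl⟩
      exact ⟨hpT, by simp only [Set.mem_ofPred_eq, l_proj he hp]; positivity⟩
    · rintro ⟨hq, hl⟩
      refine ⟨proj l e q, ⟨?_, ?_⟩, proj_proj he hl⟩
      · rw [l_proj he hl]; exact inv_pos.2 hl
      · rw [proj_proj he hl]; exact hq
  have hinj : Set.InjOn (proj l e) P := by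
    intro p hp q hq hpq
    rw [← proj_proj he hp.1, ← proj_proj he hq.1, hpq]
  have hder : ∀ p ∈ P, HasFDerivWithinAt (proj l e)
      ((l p)⁻¹ • (ContinuousLinearMap.id ℝ (EuclideanSpace ℝ (Fin n)) - (l p)⁻¹ • l.smulRight (p + e))) P p := by
    intro p hp
    apply HasFDerivAt.hasFDerivWithinAt
    have hp0 : l p ≠ 0 := ne_of_gt hp.1
    have h1 : HasFDerivAt (fun p => (l p)⁻¹) (-(l p ^ 2)⁻¹ • l) p :=
      (hasDerivAt_inv hp0).comp_hasFDerivAt p l.hasFDerivAt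
    have h2 := (h1.smul ((hasFDerivAt_id p).add_const e)).sub_const e
    refine h2.congr_fderiv ?_
    ext1 v
    simp only [_root_.add_apply, _root_.smul_apply,
      _root_.sub_apply, ContinuousLinearMap.smulRight_apply, id,
      ContinuousLinearMap.id_apply, smul_sub, smul_smul, smul_eq_mul]
    rw [sub_eq_add_neg, ← neg_smul]
    congr 2
    field_simp
  have hcv := lintegral_image_eq_lintegral_abs_det_fderiv_mul volume hP hder hinj (fun _ => 1)
  rw [him] at hcv
  simp only [lintegral_one, Measure.restrict_apply_univ, mul_one] at hcv
  rw [hcv]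
  refine setLIntegral_congr_fun hP fun p hp => ?_
  have hp0 : 0 < l p := hp.1
  congr 1
  have e1 : (((l p)⁻¹ • (ContinuousLinearMap.id ℝ (EuclideanSpace ℝ (Fin n)) -
      (l p)⁻¹ • l.smulRight (p + e)) : EuclideanSpace ℝ (Fin n) →L[ℝ] EuclideanSpace ℝ (Fin n)) :
      EuclideanSpace ℝ (Fin n) →ₗ[ℝ] EuclideanSpace ℝ (Fin n)) =
      (l p)⁻¹ • LinearMap.transvection (l : EuclideanSpace ℝ (Fin n) →ₗ[ℝ] ℝ) (-(l p)⁻¹ • (p + e)) := by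
    ext1 v
    simp [LinearMap.transvection.apply, smul_smul, sub_eq_add_neg, mul_comm]
    rw [add_comm, mul_left_comm]
  rw [ContinuousLinearMap.det, e1, LinearMap.det_smul, LinearMap.transvection.det]
  have e2 : 1 + (l : EuclideanSpace ℝ (Fin n) →ₗ[ℝ] ℝ) (-(l p)⁻¹ • (p + e)) = -(l p)⁻¹ := by
    simp [he]
    field_simp; ring
  rw [e2, abs_mul, abs_neg, abs_of_pos (inv_pos.2 hp0), abs_of_pos (by positivity)]
  simp [pow_succ]

theorem half_ineq {a b : ℝ} (ha : 0 < a) (hb : 0 < b) (hab : a + b = 1) (he : l e = 1)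
    {S T R : Set (EuclideanSpace ℝ (Fin n))}
    (hS : MeasurableSet S) (hT : MeasurableSet T) (hR : MeasurableSet R)
    (H : ∀ p ∈ S, ∀ q ∈ T, ∀ c d : ℝ, 0 < c → 0 < d → c + d = 1 → 0 < l p → 0 < l q →
      c * b * l p = d * a * l q → c • p + d • q ∈ R) :
    (volume (R ∩ {p | 0 < l p}))⁻¹ ≤ ENNReal.ofReal a * (volume (S ∩ {p | 0 < l p}))⁻¹ +
      ENNReal.ofReal b * (volume (T ∩ {p | 0 < l p}))⁻¹ := by
  rw [← lintegral_dens he hS, ← lintegral_dens he hT, ← lintegral_dens he hR]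
  refine bbl_euclid ha hb n (measurable_dens hS) (measurable_dens hT) (measurable_dens hR) ?_
  have hneg : -(1/(1+n:ℝ)) < 0 := by
    have : 0 < 1/(1+n:ℝ) := by positivity
    linarith
  have val : ∀ {s : ℝ}, 0 < s →
      ENNReal.ofReal ((s⁻¹) ^ (n+1)) ^ (-(1/(1+n:ℝ))) = ENNReal.ofReal s := by
    intro s hs
    rw [ENNReal.ofReal_rpow_of_pos (by positivity), ← Real.rpow_natCast, ← Real.rpow_mul (by positivity)]
    have : ((n+1:ℕ):ℝ) * -(1/(1+n:ℝ)) = -1 := by push_cast; field_simp; ring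
    rw [this, Real.rpow_neg_one, inv_inv]
  intro x y
  by_cases hx : 0 < l x ∧ proj l e x ∈ S
  swap
  · have : dens l e S x = 0 := Set.indicator_of_notMem (s := {p | 0 < l p ∧ proj l e p ∈ S}) hx _
    rw [this, ENNReal.zero_rpow_of_neg hneg, ENNReal.mul_top (by simpa using ha)]; simp
  by_cases hy : 0 < l y ∧ proj l e y ∈ T
  swap
  · have : dens l e T y = 0 := Set.indicator_of_notMem (s := {p | 0 < l p ∧ proj l e p ∈ T}) hy _
    rw [this, ENNReal.zero_rpow_of_neg hneg, ENNReal.mul_top (by simpa using hb)]; simp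
  have hlx := hx.1
  have hly := hy.1
  have hlz : l (a • x + b • y) = a * l x + b * l y := by simp
  have hpos : 0 < a * l x + b * l y := by positivity
  have hz : 0 < l (a • x + b • y) ∧ proj l e (a • x + b • y) ∈ R := by
    refine ⟨by rw [hlz]; exact hpos, ?_⟩
    have := H _ hx.2 _ hy.2 (a * l x / (a * l x + b * l y)) (b * l y / (a * l x + b * l y))
      (by positivity) (by positivity) (by field_simp) (by rw [l_proj he hlx]; positivity)
      (by rw [l_proj he hly]; positivity)
      (by rw [l_proj he hlx, l_proj he hly]; field_simp)
    convert this using 1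
    ext i
    simp only [proj, hlz, PiLp.add_apply, PiLp.sub_apply, PiLp.smul_apply, smul_eq_mul]
    field_simp
    linear_combination -(e i) * hab
  have d1 : dens l e S x = ENNReal.ofReal (((l x)⁻¹) ^ (n+1)) := Set.indicator_of_mem (s := {p | 0 < l p ∧ proj l e p ∈ S}) hx _
  have d2 : dens l e T y = ENNReal.ofReal (((l y)⁻¹) ^ (n+1)) := Set.indicator_of_mem (s := {p | 0 < l p ∧ proj l e p ∈ T}) hy _
  have d3 : dens l e R (a • x + b • y) = ENNReal.ofReal (((l (a • x + b • y))⁻¹) ^ (n+1)) :=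
    Set.indicator_of_mem (s := {p | 0 < l p ∧ proj l e p ∈ R}) hz _
  rw [d1, d2, d3, val hlx, val hly, val hz.1, hlz, ENNReal.ofReal_add (by positivity) (by positivity),
    ENNReal.ofReal_mul ha.le, ENNReal.ofReal_mul hb.le]

end

theorem half_vol {n : ℕ} (l : EuclideanSpace ℝ (Fin n) →L[ℝ] ℝ) {e : EuclideanSpace ℝ (Fin n)}
    (he : l e = 1) {S : Set (EuclideanSpace ℝ (Fin n))} (hsym : ∀ p ∈ S, -p ∈ S) :
    volume S = 2 * volume (S ∩ {p | 0 < l p}) := by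
  have hU : MeasurableSet {p : EuclideanSpace ℝ (Fin n) | 0 < l p} :=
    measurableSet_lt measurable_const l.measurable
  have hker : volume {p : EuclideanSpace ℝ (Fin n) | l p = 0} = 0 := by
    have := Measure.addHaar_submodule (volume : Measure (EuclideanSpace ℝ (Fin n)))
      (LinearMap.ker (l : EuclideanSpace ℝ (Fin n) →ₗ[ℝ] ℝ)) (by
        intro h
        have : e ∈ LinearMap.ker (l : EuclideanSpace ℝ (Fin n) →ₗ[ℝ] ℝ) := by rw [h]; trivial
        have h2 : l e = 0 := by simpa using this
        rw [he] at h2; exact one_ne_zero h2)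
    exact this
  have hneg : volume (-(S ∩ {p | 0 < l p})) = volume (S ∩ {p | 0 < l p}) := Measure.measure_neg _ _
  rw [← measure_inter_add_sdiff S hU, two_mul]
  congr 1
  apply le_antisymm
  · calc volume (S \ {p | 0 < l p}) ≤ volume (-(S ∩ {p | 0 < l p}) ∪ {p | l p = 0}) := by
          apply measure_mono
          rintro p ⟨hp, hl⟩
          have hl' : l p ≤ 0 := not_lt.1 hl
          rcases hl'.lt_or_eq with h | h
          · left
            refine ⟨hsym p hp, ?_⟩
            simpa using h
          · right; exact h
      _ ≤ _ := (measure_union_le _ _).trans (by rw [hneg, hker, add_zero])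
  · rw [← hneg]
    apply measure_mono
    rintro p ⟨hp, hl⟩
    refine ⟨by simpa using hsym _ hp, ?_⟩
    have hl' : 0 < l (-p) := hl
    rw [map_neg] at hl'
    intro h
    have h' : 0 < l p := h
    linarith

/-- Proposition 1(i): for `ξ` uniform on a compact convex symmetric `K` of positive volume,
the slab probability `f(x) = Vol({ξ ∈ K : |⟨ξ,x⟩| ≤ 1})/Vol(K)` is positive and `1/f` is convex. -/
theorem stmt_7 {n : ℕ} (K : Set (EuclideanSpace ℝ (Fin n)))
    (hKcomp : IsCompact K) (hKconv : Convex ℝ K) (hKsym : K = -K)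
    (hvol : 0 < volume K) :
    (∀ x : EuclideanSpace ℝ (Fin n),
      0 < (volume {ξ ∈ K | |⟪ξ, x⟫_ℝ| ≤ 1}).toReal / (volume K).toReal) ∧
    ConvexOn ℝ Set.univ (fun x : EuclideanSpace ℝ (Fin n) =>
      1 / ((volume {ξ ∈ K | |⟪ξ, x⟫_ℝ| ≤ 1}).toReal / (volume K).toReal)) := by
  have hKfin : volume K ≠ ∞ := hKcomp.measure_lt_top.ne
  have hKpos : 0 < (volume K).toReal := ENNReal.toReal_pos hvol.ne' hKfin
  have hneg : ∀ p ∈ K, -p ∈ K := by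
    intro p hp
    rw [hKsym] at hp; exact hp
  set S : EuclideanSpace ℝ (Fin n) → Set (EuclideanSpace ℝ (Fin n)) :=
    fun x => {ξ ∈ K | |⟪ξ, x⟫_ℝ| ≤ 1} with hS
  have hSfin : ∀ x, volume (S x) ≠ ∞ := fun x =>
    ne_top_of_le_ne_top hKfin (measure_mono fun p hp => hp.1)
  have hSmeas : ∀ x, MeasurableSet (S x) := fun x =>
    hKcomp.measurableSet.inter (measurableSet_le
      (f := fun p : EuclideanSpace ℝ (Fin n) => |⟪p, x⟫_ℝ|)
      (Continuous.measurable (by fun_prop)) measurable_const)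
  have hSsym : ∀ x, ∀ p ∈ S x, -p ∈ S x := by
    rintro x p ⟨hp, hl⟩
    exact ⟨hneg p hp, by simpa using hl⟩
  have h0 : (0 : EuclideanSpace ℝ (Fin n)) ∈ interior K := by
    have hne : (interior K).Nonempty := by
      by_contra h
      rw [Set.not_nonempty_iff_eq_empty] at h
      have hf := hKconv.addHaar_frontier (volume : Measure (EuclideanSpace ℝ (Fin n)))
      rw [hKcomp.isClosed.frontier_eq, h, Set.sdiff_empty] at hf
      exact hvol.ne' hf
    obtain ⟨p, hp⟩ := hne
    have hp2 := hKconv.combo_interior_self_mem_interior hp (hneg p (interior_subset hp))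
      (a := 1/2) (b := 1/2) (by norm_num) (by norm_num) (by norm_num)
    simpa using hp2
  have hSpos : ∀ x, 0 < volume (S x) := by
    intro x
    have hnhds : S x ∈ nhds 0 := by
      have h1 : K ∈ nhds (0 : EuclideanSpace ℝ (Fin n)) := mem_interior_iff_mem_nhds.1 h0
      have hc : Continuous fun p : EuclideanSpace ℝ (Fin n) => |⟪p, x⟫_ℝ| := by fun_prop
      have h2 : ∀ᶠ p in nhds (0 : EuclideanSpace ℝ (Fin n)), |⟪p, x⟫_ℝ| < 1 :=
        hc.continuousAt.eventually_lt continuousAt_const (by simp)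
      filter_upwards [h1, h2] with p hp hp2
      exact ⟨hp, hp2.le⟩
    exact Measure.measure_pos_of_mem_nhds _ hnhds
  have hVpos : ∀ x, 0 < (volume (S x)).toReal := fun x =>
    ENNReal.toReal_pos (hSpos x).ne' (hSfin x)
  refine ⟨fun x => div_pos (hVpos x) hKpos, ?_⟩
  rw [convexOn_iff_pairwise_pos]
  refine ⟨convex_univ, ?_⟩
  intro x _ y _ hxy a b ha hb hab
  have hxy0 : x - y ≠ 0 := sub_ne_zero.2 hxy
  set l : EuclideanSpace ℝ (Fin n) →L[ℝ] ℝ := innerSL ℝ (x - y) with hl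
  have hlv : ∀ p, l p = ⟪p, x⟫_ℝ - ⟪p, y⟫_ℝ := by
    intro p
    rw [hl, innerSL_apply_apply, real_inner_comm, inner_sub_right]
  have he : l ((‖x - y‖ ^ 2)⁻¹ • (x - y)) = 1 := by
    rw [map_smul, hl, innerSL_apply_apply, real_inner_self_eq_norm_sq, smul_eq_mul]
    exact inv_mul_cancel₀ (by simpa using hxy0)
  have key := half_ineq ha hb hab he (hSmeas x) (hSmeas y) (hSmeas (a • x + b • y)) (by
    rintro p ⟨hpK, hp⟩ q ⟨hqK, hq⟩ c d hc hd hcd hlp hlq hrel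
    refine ⟨hKconv hpK hqK hc.le hd.le hcd, ?_⟩
    rw [hlv, hlv] at hrel
    have e1 : ⟪c • p + d • q, a • x + b • y⟫_ℝ = c * ⟪p, x⟫_ℝ + d * ⟪q, y⟫_ℝ := by
      simp only [inner_add_left, inner_add_right, real_inner_smul_left, real_inner_smul_right]
      have hb' : b = 1 - a := by linarith
      subst hb'
      linear_combination -hrel
    rw [e1]
    rw [abs_le] at hp hq ⊢
    constructor <;> nlinarith)
  have hv : ∀ z, (volume (S z ∩ {p | 0 < l p})).toReal = (volume (S z)).toReal / 2 := by
    intro z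
    rw [half_vol l he (hSsym z)]
    simp
  have hvpos : ∀ z, 0 < (volume (S z ∩ {p | 0 < l p})).toReal := fun z => by
    rw [hv]; have := hVpos z; positivity
  have hvn : ∀ z, (volume (S z ∩ {p | 0 < l p}))⁻¹ ≠ ∞ := fun z => by
    rw [ENNReal.inv_ne_top]
    intro h
    have := hvpos z
    rw [h] at this; simp at this
  have k2 := ENNReal.toReal_mono (ENNReal.add_ne_top.2
    ⟨ENNReal.mul_ne_top (by simp) (hvn x), ENNReal.mul_ne_top (by simp) (hvn y)⟩) key
  rw [ENNReal.toReal_add (ENNReal.mul_ne_top (by simp) (hvn x)) (ENNReal.mul_ne_top (by simp) (hvn y)),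
    ENNReal.toReal_mul, ENNReal.toReal_mul, ENNReal.toReal_inv, ENNReal.toReal_inv, ENNReal.toReal_inv,
    ENNReal.toReal_ofReal ha.le, ENNReal.toReal_ofReal hb.le, hv, hv, hv] at k2
  have k3 := mul_le_mul_of_nonneg_left k2 (by positivity : 0 ≤ (volume K).toReal / 2)
  change 1 / ((volume (S (a • x + b • y))).toReal / (volume K).toReal) ≤
    a * (1 / ((volume (S x)).toReal / (volume K).toReal)) +
    b * (1 / ((volume (S y)).toReal / (volume K).toReal))
  have hz := hVpos (a • x + b • y)
  have hx := hVpos x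
  have hy := hVpos y
  calc _ = (volume K).toReal / 2 * ((volume (S (a • x + b • y))).toReal / 2)⁻¹ := by field_simp
    _ ≤ _ := k3
    _ = _ := by field_simp
end

section
/- Let X ⊆ ℝⁿ be a closed convex set, let f : ℝⁿ → ℝ be differentiable with ∇f Lipschitz continuous with constant L, and suppose h(x) := 1/f(x) is convex on X with ε ≤ f(x) ≤ 1 on X for some 0 < ε ≤ 1, and the solution set X* := argmin_{x ∈ X} h(x) is nonempty. Let (Ω, F, P) be a probability space with filtration (F_k)_{k≥0}, and let (γ_k) and (β_k) be positive deterministic sequences with ∑_k γ_k/β_k = ∞, ∑_k γ_k²/β_k² < ∞, and 0 < β_k ≤ ε for all k. Let x₀ be an F₀-measurable X-valued random variable, and let (w_k) be random vectors such that w_k is F_{k+1}-measurable, E[w_k | F_k] = 0 almost surely, and E[‖w_k‖² | F_k] ≤ ν² almost surely for some ν ≥ 0. Define iterates by x_{k+1}(ω) ∈ X with ‖x_{k+1}(ω) − z_k(ω)‖ ≤ ‖y − z_k(ω)‖ for all y ∈ X, where z_k := x_k + (γ_k/β_k)(∇f(x_k) + w_k) (i.e., x_{k+1} is the Euclidean projection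 of z_k onto X). Then, almost surely, the sequence (x_k) converges to a point of X*. -/
open MeasureTheory Filter
open scoped InnerProductSpace

/-- Robbins–Siegmund. -/
theorem robbins_siegmund {Ω : Type*} {m0 : MeasurableSpace Ω}
    (P : Measure Ω) [IsProbabilityMeasure P] (F : Filtration ℕ m0)
    (V g : ℕ → Ω → ℝ) (b c : ℕ → ℝ)
    (hVm : ∀ k, StronglyMeasurable[F k] (V k)) (hgm : ∀ k, StronglyMeasurable[F k] (g k))
    (hVi : ∀ k, Integrable (V k) P) (hgi : ∀ k, Integrable (g k) P)
    (hV0 : ∀ k ω, 0 ≤ V k ω) (hg0 : ∀ k ω, 0 ≤ g k ω)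
    (hb0 : ∀ k, 0 ≤ b k) (hc0 : ∀ k, 0 ≤ c k) (hb : Summable b) (hc : Summable c)
    (h : ∀ k, ∀ᵐ ω ∂P, (P[V (k+1) | F k]) ω ≤ (1 + c k) * V k ω - g k ω + b k) :
    ∀ᵐ ω ∂P, (∃ l, Tendsto (fun k => V k ω) atTop (nhds l)) ∧ Summable (fun k => g k ω) := by
  set q : ℕ → ℝ := fun k => Real.exp (-∑ j ∈ Finset.range k, c j) with hq
  have hq0 : ∀ k, 0 < q k := fun k => Real.exp_pos _
  have hq1 : ∀ k, q k ≤ 1 := fun k => by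
    rw [hq]; simp only [Real.exp_le_one_iff]
    have := Finset.sum_nonneg (s := Finset.range k) (fun j _ => hc0 j)
    linarith
  have hqs : ∀ k, q (k+1) * (1 + c k) ≤ q k := fun k => by
    have : q k = q (k+1) * Real.exp (c k) := by
      simp only [hq]; rw [← Real.exp_add, Finset.sum_range_succ]; congr 1; ring
    rw [this]
    have := Real.add_one_le_exp (c k)
    exact mul_le_mul_of_nonneg_left (by linarith) (hq0 _).le
  have hqlim : Tendsto q atTop (nhds (Real.exp (-∑' j, c j))) :=
    (Real.continuous_exp.tendsto _).comp hc.hasSum.tendsto_sum_nat.neg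
  have hqlb : ∀ k, Real.exp (-∑' j, c j) ≤ q k := fun k =>
    Real.exp_le_exp.2 (neg_le_neg (hc.sum_le_tsum _ (fun j _ => hc0 j)))
  set R : ℕ → Ω → ℝ := fun k ω => ∑ j ∈ Finset.range k, q (j+1) * g j ω with hR
  set B : ℕ → ℝ := fun k => ∑' j, b j - ∑ j ∈ Finset.range k, b j with hB
  have hB0 : ∀ k, 0 ≤ B k := fun k => sub_nonneg.2 (hb.sum_le_tsum _ (fun j _ => hb0 j))
  have hBlim : Tendsto B atTop (nhds 0) := by
    have := (tendsto_const_nhds (x := ∑' j, b j)).sub hb.hasSum.tendsto_sum_nat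
    simpa [hB] using this
  have hR0 : ∀ k ω, 0 ≤ R k ω := fun k ω =>
    Finset.sum_nonneg fun j _ => mul_nonneg (hq0 _).le (hg0 _ _)
  have hRm' : ∀ i k, k ≤ i + 1 → StronglyMeasurable[F i] (R k) := fun i k hk => by
    refine Finset.stronglyMeasurable_fun_sum _ fun j hj => ?_
    have hj' : j ≤ i := by have := Finset.mem_range.1 hj; omega
    exact ((hgm j).mono (F.mono hj')).const_mul _
  have hRi : ∀ k, Integrable (R k) P := fun k =>
    integrable_finsetSum _ fun j _ => (hgi j).const_mul _
  set U : ℕ → Ω → ℝ := fun k ω => q k * V k ω + (R k ω + B k) with hU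
  have hU0 : ∀ k ω, 0 ≤ U k ω := fun k ω =>
    add_nonneg (mul_nonneg (hq0 _).le (hV0 _ _)) (add_nonneg (hR0 _ _) (hB0 _))
  have hUi : ∀ k, Integrable (U k) P := fun k =>
    ((hVi k).const_mul _).add ((hRi k).add (integrable_const _))
  have hsup : Supermartingale U F P := by
    refine supermartingale_nat (fun k => ?_) hUi fun k => ?_
    · exact ((hVm k).const_mul _).add ((hRm' k k (by omega)).add stronglyMeasurable_const)
    · have e1 : P[U (k+1) | F k] =ᵐ[P] P[fun ω => q (k+1) * V (k+1) ω | F k]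
          + P[fun ω => R (k+1) ω + B (k+1) | F k] :=
        condExp_add ((hVi (k+1)).const_mul _) ((hRi (k+1)).add (integrable_const _)) _
      have e2 : P[fun ω => R (k+1) ω + B (k+1) | F k] = fun ω => R (k+1) ω + B (k+1) :=
        condExp_of_stronglyMeasurable (F.le k)
          ((hRm' k (k+1) le_rfl).add stronglyMeasurable_const)
          ((hRi (k+1)).add (integrable_const _))
      have e3 : P[fun ω => q (k+1) * V (k+1) ω | F k] =ᵐ[P] q (k+1) • P[V (k+1) | F k] :=
        condExp_smul (q (k+1)) (V (k+1)) _
      filter_upwards [e1, e3, h k] with ω h1 h3 hk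
      rw [h1, Pi.add_apply, h3, e2]
      simp only [Pi.smul_apply, smul_eq_mul, hU]
      have r1 : R (k+1) ω = R k ω + q (k+1) * g k ω := by
        simp only [hR]; rw [Finset.sum_range_succ]
      have r2 : B (k+1) = B k - b k := by
        simp only [hB]; rw [Finset.sum_range_succ]; ring
      rw [r1, r2]
      have a1 := mul_le_mul_of_nonneg_left hk (hq0 (k+1)).le
      have a2 := mul_le_mul_of_nonneg_right (hqs k) (hV0 k ω)
      have a3 := mul_le_mul_of_nonneg_right (hq1 (k+1)) (hb0 k)
      nlinarith
  have hbd : ∀ k, eLpNorm ((-U) k) 1 P ≤ ((∫ ω, U 0 ω ∂P).toNNReal : ENNReal) := fun k => by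
    rw [Pi.neg_apply, eLpNorm_neg, eLpNorm_one_eq_lintegral_enorm]
    have : ∫⁻ ω, ‖U k ω‖ₑ ∂P = ENNReal.ofReal (∫ ω, U k ω ∂P) := by
      rw [ofReal_integral_eq_lintegral_ofReal (hUi k) (ae_of_all _ (hU0 k))]
      refine lintegral_congr fun ω => ?_
      rw [Real.enorm_eq_ofReal (hU0 k ω)]
    rw [this]
    refine ENNReal.ofReal_le_ofReal ?_
    have := hsup.setIntegral_le (Nat.zero_le k) (MeasurableSet.univ)
    simpa using this
  filter_upwards [hsup.neg.exists_ae_tendsto_of_bdd hbd] with ω ⟨l, hl⟩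
  have hUl : Tendsto (fun k => U k ω) atTop (nhds (-l)) := by
    simpa using hl.neg
  have hsR : Summable (fun j => q (j+1) * g j ω) := by
    obtain ⟨M, hM⟩ := hUl.bddAbove_range
    refine summable_of_sum_range_le (c := M) (fun j => mul_nonneg (hq0 _).le (hg0 _ _)) fun k => ?_
    have h1 := hM ⟨k, rfl⟩
    have h2 := mul_nonneg (hq0 k).le (hV0 k ω)
    have h3 := hB0 k
    simp only [hU, hR] at h1
    linarith
  constructor
  · have hRl : Tendsto (fun k => R k ω) atTop (nhds (∑' j, q (j+1) * g j ω)) :=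
      hsR.hasSum.tendsto_sum_nat
    have h1 := ((hUl.sub hRl).sub hBlim).div hqlim (Real.exp_pos _).ne'
    refine ⟨_, h1.congr fun k => ?_⟩
    simp only [hU, Pi.div_apply]
    have := (hq0 k).ne'
    field_simp
    ring
  · refine (hsR.mul_left (Real.exp (-∑' j, c j))⁻¹).of_nonneg_of_le (fun k => hg0 k ω) fun k => ?_
    have h1 := mul_le_mul_of_nonneg_right (hqlb (k+1)) (hg0 k ω)
    have h2 := Real.exp_pos (-∑' j, c j)
    rw [inv_mul_eq_div, le_div_iff₀ h2]
    linarith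

theorem grad_ineq {E : Type*} [NormedAddCommGroup E] [InnerProductSpace ℝ E] [CompleteSpace E]
    (X : Set E) (hXconv : Convex ℝ X) (f : E → ℝ) (f' : E → E)
    (hdiff : ∀ x, HasGradientAt f (f' x) x)
    (hconv : ConvexOn ℝ X (fun x => 1 / f x)) (x y : E) (hx : x ∈ X) (hy : y ∈ X) (hf : 0 < f x) :
    (f x) ^ 2 * (1 / f x - 1 / f y) ≤ ⟪f' x, y - x⟫_ℝ := by
  set ψ : ℝ → ℝ := fun t => 1 / f (AffineMap.lineMap x y t) with hψ
  have hc : ConvexOn ℝ (Set.Icc 0 1) ψ := by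
    refine (hconv.comp_affineMap (AffineMap.lineMap x y)).subset ?_ (convex_Icc 0 1)
    intro t ht
    exact hXconv.lineMap_mem hx hy ht
  have hl : HasDerivAt (fun t : ℝ => (AffineMap.lineMap x y t : E)) (y - x) 0 :=
    AffineMap.hasDerivAt_lineMap
  have hd : HasDerivAt (fun t : ℝ => f (AffineMap.lineMap x y t)) ⟪f' x, y - x⟫_ℝ 0 := by
    have h1 : HasFDerivAt f (InnerProductSpace.toDual ℝ E (f' x)) (AffineMap.lineMap x y (0:ℝ)) := by
      simpa using (hdiff x).hasFDerivAt
    have h2 := h1.comp_hasDerivAt 0 hl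
    simp only [InnerProductSpace.toDual_apply_apply] at h2
    exact h2
  have hdψ : HasDerivAt ψ (-⟪f' x, y - x⟫_ℝ / (f x) ^ 2) 0 := by
    have := hd.inv (by simpa using hf.ne')
    simp only [AffineMap.lineMap_apply_zero] at this
    simp only [hψ, one_div]
    exact this
  have := hc.le_slope_of_hasDerivAt (x := 0) (y := 1) (by simp) (by simp) one_pos hdψ
  simp only [slope_def_field, hψ, AffineMap.lineMap_apply_one, AffineMap.lineMap_apply_zero, sub_zero, div_one] at this
  rw [div_le_iff₀ (by positivity)] at this
  nlinarith

theorem proj_le {E : Type*} [NormedAddCommGroup E] [InnerProductSpace ℝ E]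
    (X : Set E) (hXconv : Convex ℝ X) (p z y : E) (hp : p ∈ X) (hy : y ∈ X)
    (h : ∀ y ∈ X, ‖p - z‖ ≤ ‖y - z‖) : ‖p - y‖ ^ 2 ≤ ‖z - y‖ ^ 2 := by
  have hin : ⟪z - p, y - p⟫_ℝ ≤ 0 := by
    refine (norm_eq_iInf_iff_real_inner_le_zero hXconv hp).1 ?_ y hy
    have : Nonempty X := ⟨⟨p, hp⟩⟩
    refine le_antisymm (le_ciInf fun u => ?_) ?_
    · rw [norm_sub_rev z p, norm_sub_rev z u]; exact h u u.2
    · exact ciInf_le (f := fun u : X => ‖z - u‖) ⟨0, by rintro _ ⟨u, rfl⟩; exact norm_nonneg _⟩ ⟨p, hp⟩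
  have e : z - y = (z - p) - (y - p) := by abel
  rw [e, norm_sub_sq_real (z - p) (y - p), norm_sub_rev p y]
  nlinarith [sq_nonneg ‖z - p‖]

theorem step_ineq {E : Type*} [NormedAddCommGroup E] [InnerProductSpace ℝ E]
    (x xs u us w x' : E) (a L G : ℝ) (ha : 0 < a)
    (hu : ‖u - us‖ ≤ L * ‖x - xs‖) (hG : G ≤ ⟪u, xs - x⟫_ℝ)
    (hx' : ‖x' - xs‖ ^ 2 ≤ ‖x + a • (u + w) - xs‖ ^ 2) :
    ‖x' - xs‖ ^ 2 ≤ (1 + 4 * L ^ 2 * a ^ 2) * ‖x - xs‖ ^ 2 - 2 * a * G + 4 * ‖us‖ ^ 2 * a ^ 2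
      + (2 * a * ⟪x - xs, w⟫_ℝ + 2 * a ^ 2 * ‖w‖ ^ 2) := by
  have e : x + a • (u + w) - xs = (x - xs) + a • (u + w) := by abel
  have e2 : ⟪u, xs - x⟫_ℝ = - ⟪x - xs, u⟫_ℝ := by
    rw [real_inner_comm, ← inner_neg_left]; congr 1; abel
  rw [e, norm_add_sq_real, inner_smul_right, inner_add_right, norm_smul, mul_pow, Real.norm_eq_abs,
    sq_abs] at hx'
  have key : ∀ p q : E, ‖p + q‖ ^ 2 ≤ 2 * ‖p‖ ^ 2 + 2 * ‖q‖ ^ 2 := fun p q => by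
    have := norm_add_le p q
    have := norm_nonneg (p + q)
    nlinarith [sq_nonneg (‖p‖ - ‖q‖)]
  have h1 := key u w
  have h2 : ‖u‖ ^ 2 ≤ 2 * ‖u - us‖ ^ 2 + 2 * ‖us‖ ^ 2 := by simpa using key (u - us) us
  have h3 : ‖u - us‖ ^ 2 ≤ L ^ 2 * ‖x - xs‖ ^ 2 := by
    rw [← mul_pow]; exact pow_le_pow_left₀ (norm_nonneg _) hu 2
  have h4 : ‖u + w‖ ^ 2 ≤ 4 * (L ^ 2 * ‖x - xs‖ ^ 2) + 4 * ‖us‖ ^ 2 + 2 * ‖w‖ ^ 2 := by linarith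
  have h5 := mul_le_mul_of_nonneg_left h4 (sq_nonneg a)
  rw [e2] at hG
  have h6 := mul_le_mul_of_nonneg_left hG ha.le
  nlinarith

theorem key_step {n : ℕ} {Ω : Type*} {m0 : MeasurableSpace Ω}
    (P : Measure Ω) [IsProbabilityMeasure P] (F : Filtration ℕ m0)
    (X : Set (EuclideanSpace ℝ (Fin n))) (hXconv : Convex ℝ X)
    (f : EuclideanSpace ℝ (Fin n) → ℝ)
    (f' : EuclideanSpace ℝ (Fin n) → EuclideanSpace ℝ (Fin n))
    (hdiff : ∀ x, HasGradientAt f (f' x) x)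
    (L : ℝ) (hLip : ∀ x y, ‖f' x - f' y‖ ≤ L * ‖x - y‖)
    (ε : ℝ) (hε0 : 0 < ε)
    (hconv : ConvexOn ℝ X (fun x => 1 / f x))
    (hflb : ∀ x ∈ X, ε ≤ f x)
    (a : ℕ → ℝ) (ha : ∀ k, 0 < a k)
    (hsq : Summable fun k => (a k) ^ 2)
    (xk : ℕ → Ω → EuclideanSpace ℝ (Fin n)) (hadapted : ∀ k, StronglyMeasurable[F k] (xk k))
    (w : ℕ → Ω → EuclideanSpace ℝ (Fin n))
    (hwint : ∀ k, Integrable (w k) P)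
    (hw0 : ∀ k, P[w k | F k] =ᵐ[P] 0)
    (ν : ℝ)
    (hwsqint : ∀ k, Integrable (fun ω => ‖w k ω‖ ^ 2) P)
    (hw2 : ∀ k, ∀ᵐ ω ∂P, (P[fun ω => ‖w k ω‖ ^ 2 | F k]) ω ≤ ν ^ 2)
    (hX : ∀ k ω, xk k ω ∈ X)
    (hiterproj : ∀ k ω, ∀ y ∈ X,
      ‖xk (k + 1) ω - (xk k ω + (a k) • (f' (xk k ω) + w k ω))‖ ≤
        ‖y - (xk k ω + (a k) • (f' (xk k ω) + w k ω))‖)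
    (xs : EuclideanSpace ℝ (Fin n)) (hxs : xs ∈ X) (hmin : ∀ y ∈ X, 1 / f xs ≤ 1 / f y) :
    ∀ᵐ ω ∂P, (∃ l, Tendsto (fun k => ‖xk k ω - xs‖ ^ 2) atTop (nhds l)) ∧
      Summable (fun k => a k * (1 / f (xk k ω) - 1 / f xs)) := by
  have hfc : Continuous f := continuous_iff_continuousAt.2 fun x => (hdiff x).continuousAt
  have hfpos : ∀ x ∈ X, 0 < f x := fun x hx => hε0.trans_le (hflb x hx)
  set V : ℕ → Ω → ℝ := fun k ω => ‖xk k ω - xs‖ ^ 2 with hV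
  set G : ℕ → Ω → ℝ := fun k ω => ε ^ 2 * (1 / f (xk k ω) - 1 / f xs) with hG
  set φ : Ω → ℝ := fun ω => (1 + V 0 ω)⁻¹ with hφ
  have hV0 : ∀ k ω, 0 ≤ V k ω := fun k ω => sq_nonneg _
  have hφ0 : ∀ ω, 0 < φ ω := fun ω => inv_pos.2 (by linarith [hV0 0 ω])
  have hφ1 : ∀ ω, φ ω ≤ 1 := fun ω => inv_le_one_of_one_le₀ (by linarith [hV0 0 ω])
  have hG0 : ∀ k ω, 0 ≤ G k ω := fun k ω =>
    mul_nonneg (sq_nonneg _) (sub_nonneg.2 (hmin _ (hX k ω)))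
  have hG1 : ∀ k ω, G k ω ≤ ε ^ 2 * (1 / ε) := fun k ω => by
    refine mul_le_mul_of_nonneg_left ?_ (sq_nonneg _)
    have h1 := one_div_le_one_div_of_le hε0 (hflb _ (hX k ω))
    have h2 := one_div_pos.2 (hfpos xs hxs)
    linarith
  have hstep : ∀ k ω, V (k+1) ω ≤ (1 + 4 * L ^ 2 * a k ^ 2) * V k ω - 2 * a k * G k ω
      + 4 * ‖f' xs‖ ^ 2 * a k ^ 2
      + (2 * a k * ⟪xk k ω - xs, w k ω⟫_ℝ + 2 * a k ^ 2 * ‖w k ω‖ ^ 2) := fun k ω => by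
    refine step_ineq (xk k ω) xs (f' (xk k ω)) (f' xs) (w k ω) (xk (k+1) ω) (a k) L (G k ω)
      (ha k) (hLip _ _) ?_ ?_
    · refine le_trans ?_ (grad_ineq X hXconv f f' hdiff hconv _ _ (hX k ω) hxs (hfpos _ (hX k ω)))
      refine mul_le_mul_of_nonneg_right ?_ (sub_nonneg.2 (hmin _ (hX k ω)))
      exact pow_le_pow_left₀ hε0.le (hflb _ (hX k ω)) 2
    · exact proj_le X hXconv _ _ _ (hX (k+1) ω) hxs (hiterproj k ω)
  -- measurability
  have hVm : ∀ k, StronglyMeasurable[F k] (V k) := fun k =>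
    ((hadapted k).sub stronglyMeasurable_const).norm.pow 2
  have hφm0 : StronglyMeasurable[F 0] φ :=
    ((stronglyMeasurable_const.add (hVm 0)).measurable.inv).stronglyMeasurable
  have hφm : ∀ k, StronglyMeasurable[F k] φ := fun k => hφm0.mono (F.mono (Nat.zero_le k))
  have hGm : ∀ k, StronglyMeasurable[F k] (G k) := fun k => by
    have h1 : Measurable[F k] (fun ω => f (xk k ω)) := hfc.measurable.comp (hadapted k).measurable
    have h2 : Measurable[F k] (G k) := ((measurable_const.div h1).sub measurable_const).const_mul _
    exact h2.stronglyMeasurable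
  have hφVm : ∀ k, StronglyMeasurable[F k] (fun ω => φ ω * V k ω) := fun k => (hφm k).mul (hVm k)
  have hφGm : ∀ k, StronglyMeasurable[F k] (fun ω => 2 * a k * (φ ω * G k ω)) := fun k =>
    ((hφm k).mul (hGm k)).const_mul _
  have hφGi : ∀ k, Integrable (fun ω => 2 * a k * (φ ω * G k ω)) P := fun k => by
    refine Integrable.const_mul ?_ _
    refine Integrable.of_bound (C := ε ^ 2 * (1 / ε))
      (((hφm k).mul (hGm k)).mono (F.le k)).aestronglyMeasurable (ae_of_all _ fun ω => ?_)
    rw [Real.norm_of_nonneg (mul_nonneg (hφ0 ω).le (hG0 k ω))]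
    have := hG1 k ω
    have := mul_le_of_le_one_left (hG0 k ω) (hφ1 ω)
    linarith
  -- the vector multiplier
  have hum : ∀ k, StronglyMeasurable[F k] (fun ω => φ ω • (xk k ω - xs)) := fun k =>
    (hφm k).smul ((hadapted k).sub stronglyMeasurable_const)
  have hinner : ∀ k, Integrable (fun ω => φ ω * V k ω) P →
      Integrable (fun ω => ⟪φ ω • (xk k ω - xs), w k ω⟫_ℝ) P := fun k hk => by
    refine (hk.add (hwsqint k)).mono'
      (((hum k).mono (F.le k)).aestronglyMeasurable.inner (hwint k).aestronglyMeasurable)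
      (ae_of_all _ fun ω => ?_)
    refine (norm_inner_le_norm _ _).trans ?_
    rw [norm_smul, Real.norm_of_nonneg (hφ0 ω).le]
    simp only [hV, Pi.add_apply]
    have h1 := hφ0 ω
    have h2 := hφ1 ω
    have h3 := norm_nonneg (xk k ω - xs)
    have h4 := norm_nonneg (w k ω)
    have h5 : 0 ≤ φ ω * (‖xk k ω - xs‖ - ‖w k ω‖) ^ 2 := by positivity
    have h6 : 0 ≤ φ ω * ‖xk k ω - xs‖ ^ 2 := by positivity
    have h7 : φ ω * ‖w k ω‖ ^ 2 ≤ ‖w k ω‖ ^ 2 := mul_le_of_le_one_left (by positivity) h2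
    have h8 : 0 ≤ ‖w k ω‖ ^ 2 := by positivity
    nlinarith
  set A : ℕ → Ω → ℝ := fun k ω => (1 + 4 * L ^ 2 * a k ^ 2) * (φ ω * V k ω)
    - 2 * a k * (φ ω * G k ω) + 4 * ‖f' xs‖ ^ 2 * a k ^ 2 with hA
  set N : ℕ → Ω → ℝ := fun k ω => 2 * a k * ⟪φ ω • (xk k ω - xs), w k ω⟫_ℝ
    + 2 * a k ^ 2 * ‖w k ω‖ ^ 2 with hN
  have hstep' : ∀ k ω, φ ω * V (k+1) ω ≤ A k ω + N k ω := fun k ω => by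
    have h1 := mul_le_mul_of_nonneg_left (hstep k ω) (hφ0 ω).le
    have h2 : φ ω * (4 * ‖f' xs‖ ^ 2 * a k ^ 2) ≤ 4 * ‖f' xs‖ ^ 2 * a k ^ 2 :=
      mul_le_of_le_one_left (by positivity) (hφ1 ω)
    have h3 : φ ω * (2 * a k ^ 2 * ‖w k ω‖ ^ 2) ≤ 2 * a k ^ 2 * ‖w k ω‖ ^ 2 :=
      mul_le_of_le_one_left (by positivity) (hφ1 ω)
    simp only [hA, hN, real_inner_smul_left]
    linarith
  have hAi : ∀ k, Integrable (fun ω => φ ω * V k ω) P → Integrable (A k) P := fun k hk =>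
    ((hk.const_mul _).sub (hφGi k)).add (integrable_const _)
  have hNi : ∀ k, Integrable (fun ω => φ ω * V k ω) P → Integrable (N k) P := fun k hk =>
    ((hinner k hk).const_mul _).add ((hwsqint k).const_mul _)
  have hφVi : ∀ k, Integrable (fun ω => φ ω * V k ω) P := fun k => by
    induction k with
    | zero =>
      refine Integrable.of_bound (C := 1) ((hφVm 0).mono (F.le 0)).aestronglyMeasurable
        (ae_of_all _ fun ω => ?_)
      rw [Real.norm_of_nonneg (mul_nonneg (hφ0 ω).le (hV0 0 ω))]
      simp only [hφ]
      rw [inv_mul_eq_div, div_le_one (by linarith [hV0 0 ω])]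
      linarith
    | succ k ih =>
      refine ((hAi k ih).add (hNi k ih)).mono' ((hφVm (k+1)).mono (F.le _)).aestronglyMeasurable
        (ae_of_all _ fun ω => ?_)
      rw [Real.norm_of_nonneg (mul_nonneg (hφ0 ω).le (hV0 _ ω))]
      exact hstep' k ω
  have hAm : ∀ k, StronglyMeasurable[F k] (A k) := fun k =>
    (((hφVm k).const_mul _).sub (hφGm k)).add stronglyMeasurable_const
  have hce : ∀ k, ∀ᵐ ω ∂P, (P[fun ω => φ ω * V (k+1) ω | F k]) ω ≤
      (1 + 4 * L ^ 2 * a k ^ 2) * (φ ω * V k ω) - 2 * a k * (φ ω * G k ω)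
        + (4 * ‖f' xs‖ ^ 2 + 2 * ν ^ 2) * a k ^ 2 := fun k => by
    have hi := hinner k (hφVi k)
    have e0 : P[fun ω => φ ω * V (k+1) ω | F k] ≤ᵐ[P] P[A k + N k | F k] :=
      condExp_mono (hφVi (k+1)) ((hAi k (hφVi k)).add (hNi k (hφVi k))) (ae_of_all _ (hstep' k))
    have e1 : P[A k + N k | F k] =ᵐ[P] P[A k | F k] + P[N k | F k] :=
      condExp_add (hAi k (hφVi k)) (hNi k (hφVi k)) _
    have e2 : P[A k | F k] = A k :=
      condExp_of_stronglyMeasurable (F.le k) (hAm k) (hAi k (hφVi k))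
    have e3 : P[N k | F k] =ᵐ[P] P[fun ω => 2 * a k * ⟪φ ω • (xk k ω - xs), w k ω⟫_ℝ | F k]
        + P[fun ω => 2 * a k ^ 2 * ‖w k ω‖ ^ 2 | F k] :=
      condExp_add (hi.const_mul _) ((hwsqint k).const_mul _) _
    have e4 : P[fun ω => 2 * a k * ⟪φ ω • (xk k ω - xs), w k ω⟫_ℝ | F k] =ᵐ[P]
        (2 * a k) • P[fun ω => ⟪φ ω • (xk k ω - xs), w k ω⟫_ℝ | F k] :=
      condExp_smul (2 * a k) _ _
    have e5 : P[fun ω => 2 * a k ^ 2 * ‖w k ω‖ ^ 2 | F k] =ᵐ[P]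
        (2 * a k ^ 2) • P[fun ω => ‖w k ω‖ ^ 2 | F k] :=
      condExp_smul (2 * a k ^ 2) _ _
    have e6 : P[fun ω => ⟪φ ω • (xk k ω - xs), w k ω⟫_ℝ | F k] =ᵐ[P]
        fun ω => ⟪φ ω • (xk k ω - xs), (P[w k | F k]) ω⟫_ℝ :=
      condExp_bilin_of_stronglyMeasurable_left (innerSL ℝ) (hum k) hi (hwint k)
    filter_upwards [e0, e1, e3, e4, e5, e6, hw0 k, hw2 k] with ω h0 h1 h3 h4 h5 h6 h7 h8
    refine h0.trans ?_
    rw [h1, Pi.add_apply, e2, h3, Pi.add_apply, h4, h5, Pi.smul_apply, Pi.smul_apply, h6, h7]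
    simp only [Pi.zero_apply, inner_zero_right, smul_eq_mul, mul_zero, zero_add, hA]
    have := mul_le_mul_of_nonneg_left h8 (show 0 ≤ 2 * a k ^ 2 by positivity)
    linarith
  have hfin := robbins_siegmund P F (fun k ω => φ ω * V k ω) (fun k ω => 2 * a k * (φ ω * G k ω))
    (fun k => (4 * ‖f' xs‖ ^ 2 + 2 * ν ^ 2) * a k ^ 2) (fun k => 4 * L ^ 2 * a k ^ 2)
    hφVm hφGm hφVi hφGi (fun k ω => mul_nonneg (hφ0 ω).le (hV0 k ω))
    (fun k ω => mul_nonneg (by linarith [ha k]) (mul_nonneg (hφ0 ω).le (hG0 k ω)))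
    (fun k => by positivity) (fun k => by positivity) (hsq.mul_left _) (hsq.mul_left _) hce
  filter_upwards [hfin] with ω ⟨⟨l, hl⟩, hs⟩
  have hne := (hφ0 ω).ne'
  refine ⟨⟨_, (hl.const_mul (φ ω)⁻¹).congr fun k => ?_⟩,
    (hs.mul_left (2 * φ ω * ε ^ 2)⁻¹).congr fun k => ?_⟩
  · field_simp
    rfl
  · simp only [hG]
    have := hε0.ne'
    generalize 1 / f (xk k ω) - 1 / f xs = r
    field_simp

/-- The deterministic conclusion. -/
theorem det_concl {E : Type*} [NormedAddCommGroup E] [ProperSpace E]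
    (X S : Set E) (hX : IsClosed X) (h : E → ℝ) (hh : ContinuousOn h X) (xs : E) (hxs : xs ∈ S)
    (hS : S = {x ∈ X | ∀ y ∈ X, h x ≤ h y}) (D : Set E) (hDS : S ⊆ closure D)
    (a : ℕ → ℝ) (ha : ∀ k, 0 < a k)
    (hdiv : Tendsto (fun K => ∑ k ∈ Finset.range K, a k) atTop atTop)
    (x : ℕ → E) (hx : ∀ k, x k ∈ X) (hsum : Summable (fun k => a k * (h (x k) - h xs)))
    (hbd : ∃ l, Tendsto (fun k => ‖x k - xs‖ ^ 2) atTop (nhds l))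
    (hD : ∀ d ∈ D, ∃ l, Tendsto (fun k => ‖x k - d‖ ^ 2) atTop (nhds l)) :
    ∃ q ∈ S, Tendsto x atTop (nhds q) := by
  have hxs' : xs ∈ X ∧ ∀ y ∈ X, h xs ≤ h y := by rw [hS] at hxs; exact hxs
  have hfreq : ∀ δ > 0, ∃ᶠ k in atTop, h (x k) - h xs < δ := by
    intro δ hδ hcon
    have hev : ∀ᶠ k in atTop, δ ≤ h (x k) - h xs := by
      filter_upwards [hcon] with k hk using not_lt.1 hk
    have hsa : Summable a := by
      refine Summable.of_norm_bounded_eventually_nat (hsum.mul_left δ⁻¹) ?_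
      filter_upwards [hev] with k hk
      rw [Real.norm_of_nonneg (ha k).le, inv_mul_eq_div, le_div_iff₀ hδ]
      exact mul_le_mul_of_nonneg_left hk (ha k).le
    exact not_tendsto_atTop_of_tendsto_nhds hsa.hasSum.tendsto_sum_nat hdiv
  obtain ⟨σ, hσ, hσl⟩ : ∃ σ : ℕ → ℕ, StrictMono σ ∧ ∀ k, h (x (σ k)) - h xs < 1 / ((k:ℝ) + 1) :=
    extraction_forall_of_frequently fun k => hfreq _ (by positivity)
  obtain ⟨l, hl⟩ := hbd
  obtain ⟨M, hM⟩ := hl.bddAbove_range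
  have hball : ∀ k, x k ∈ Metric.closedBall xs (M + 1) := fun k => by
    rw [mem_closedBall_iff_norm]
    have h1 : ‖x k - xs‖ ^ 2 ≤ M := hM ⟨k, rfl⟩
    nlinarith [sq_nonneg (‖x k - xs‖ - 1)]
  obtain ⟨q, -, τ, hτ, hq⟩ := (isCompact_closedBall xs (M + 1)).tendsto_subseq
    (fun k => hball (σ k))
  have hqX : q ∈ X := hX.mem_of_tendsto hq (Eventually.of_forall fun k => hx _)
  have hqh : h q ≤ h xs := by
    have h1 : Tendsto (fun k => h (x (σ (τ k)))) atTop (nhds (h q)) :=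
      (hh q hqX).tendsto.comp (tendsto_nhdsWithin_iff.2 ⟨hq, Eventually.of_forall fun k => hx _⟩)
    have h2 : Tendsto (fun k => h xs + 1 / ((τ k : ℝ) + 1)) atTop (nhds (h xs + 0)) :=
      tendsto_const_nhds.add (tendsto_one_div_add_atTop_nhds_zero_nat.comp hτ.tendsto_atTop)
    rw [add_zero] at h2
    refine le_of_tendsto_of_tendsto' h1 h2 fun k => ?_
    have := hσl (τ k)
    linarith
  have hqS : q ∈ S := by
    rw [hS]; exact ⟨hqX, fun y hy => hqh.trans (hxs'.2 y hy)⟩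
  refine ⟨q, hqS, ?_⟩
  rw [Metric.tendsto_atTop]
  intro δ hδ
  obtain ⟨d, hdD, hd⟩ := Metric.mem_closure_iff.1 (hDS hqS) (δ / 4) (by linarith)
  obtain ⟨l', hl'⟩ := hD d hdD
  have hl2 : Tendsto (fun k => ‖x k - d‖) atTop (nhds (Real.sqrt l')) :=
    ((Real.continuous_sqrt.tendsto _).comp hl').congr fun k => by
      simp [Real.sqrt_sq (norm_nonneg _)]
  have hl3 : Tendsto (fun k => ‖x (σ (τ k)) - d‖) atTop (nhds ‖q - d‖) :=
    (hq.sub_const d).norm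
  have hl4 := tendsto_nhds_unique hl3 (hl2.comp (hσ.comp hτ).tendsto_atTop)
  rw [← hl4] at hl2
  rw [dist_eq_norm] at hd
  obtain ⟨K, hK⟩ := eventually_atTop.1 (hl2.eventually (gt_mem_nhds (show ‖q - d‖ < δ / 2 by linarith)))
  refine ⟨K, fun k hk => ?_⟩
  have h1 := hK k hk
  have h2 : dist (x k) q ≤ dist (x k) d + dist d q := dist_triangle _ _ _
  rw [dist_comm d q, dist_eq_norm (x k) d, dist_eq_norm q d] at h2
  linarith

/-- Proposition 2(i): almost-sure convergence of the modified stochastic approximation scheme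
`x_{k+1} = Π_X(x_k + (γ_k/β_k)(∇f(x_k) + w_k))` to the solution set of `min_{x ∈ X} 1/f(x)`. -/
theorem stmt_11 {n : ℕ} {Ω : Type*} {m0 : MeasurableSpace Ω}
    (P : Measure Ω) [IsProbabilityMeasure P] (F : Filtration ℕ m0)
    (X : Set (EuclideanSpace ℝ (Fin n))) (hXclosed : IsClosed X) (hXconv : Convex ℝ X)
    (f : EuclideanSpace ℝ (Fin n) → ℝ)
    (f' : EuclideanSpace ℝ (Fin n) → EuclideanSpace ℝ (Fin n))
    (hdiff : ∀ x, HasGradientAt f (f' x) x)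
    (L : ℝ) (hLip : ∀ x y, ‖f' x - f' y‖ ≤ L * ‖x - y‖)
    (ε : ℝ) (hε0 : 0 < ε) (hε1 : ε ≤ 1)
    (hconv : ConvexOn ℝ X (fun x => 1 / f x))
    (hflb : ∀ x ∈ X, ε ≤ f x) (hfub : ∀ x ∈ X, f x ≤ 1)
    (hXstarne : {x ∈ X | ∀ y ∈ X, 1 / f x ≤ 1 / f y}.Nonempty)
    (γ β : ℕ → ℝ) (hγpos : ∀ k, 0 < γ k) (hβpos : ∀ k, 0 < β k) (hβε : ∀ k, β k ≤ ε)
    (hdiv : Tendsto (fun K => ∑ k ∈ Finset.range K, γ k / β k) atTop atTop)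
    (hsq : Summable fun k => (γ k / β k) ^ 2)
    (xk : ℕ → Ω → EuclideanSpace ℝ (Fin n)) (hadapted : Adapted F xk)
    (hx0X : ∀ ω, xk 0 ω ∈ X)
    (w : ℕ → Ω → EuclideanSpace ℝ (Fin n))
    (hwmeas : ∀ k, StronglyMeasurable[F (k + 1)] (w k))
    (hwint : ∀ k, Integrable (w k) P)
    (hw0 : ∀ k, P[w k | F k] =ᵐ[P] 0)
    (ν : ℝ) (hν : 0 ≤ ν)
    (hwsqint : ∀ k, Integrable (fun ω => ‖w k ω‖ ^ 2) P)
    (hw2 : ∀ k, ∀ᵐ ω ∂P, (P[fun ω => ‖w k ω‖ ^ 2 | F k]) ω ≤ ν ^ 2)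
    (hiterX : ∀ k ω, xk (k + 1) ω ∈ X)
    (hiterproj : ∀ k ω, ∀ y ∈ X,
      ‖xk (k + 1) ω - (xk k ω + (γ k / β k) • (f' (xk k ω) + w k ω))‖ ≤
        ‖y - (xk k ω + (γ k / β k) • (f' (xk k ω) + w k ω))‖) :
    ∀ᵐ ω ∂P, ∃ q ∈ {x ∈ X | ∀ y ∈ X, 1 / f x ≤ 1 / f y},
      Tendsto (fun k => xk k ω) atTop (nhds q) := by
  have hfc : Continuous f := continuous_iff_continuousAt.2 fun x => (hdiff x).continuousAt
  have hX : ∀ k ω, xk k ω ∈ X := fun k ω => by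
    cases k with
    | zero => exact hx0X ω
    | succ k => exact hiterX k ω
  have ha : ∀ k, 0 < γ k / β k := fun k => div_pos (hγpos k) (hβpos k)
  have key := key_step P F X hXconv f f' hdiff L hLip ε hε0 hconv hflb (fun k => γ k / β k) ha hsq
    xk (fun k => (hadapted k).stronglyMeasurable) w hwint hw0 ν hwsqint hw2 hX hiterproj
  obtain ⟨xs, hxs⟩ := hXstarne
  obtain ⟨D, hDS, hDc, hDd⟩ := (TopologicalSpace.IsSeparable.of_separableSpace
    {x ∈ X | ∀ y ∈ X, 1 / f x ≤ 1 / f y}).exists_countable_dense_subset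
  have hDall : ∀ᵐ ω ∂P, ∀ d ∈ D, ∃ l, Tendsto (fun k => ‖xk k ω - d‖ ^ 2) atTop (nhds l) := by
    rw [ae_ball_iff hDc]
    intro d hd
    filter_upwards [key d (hDS hd).1 (hDS hd).2] with ω hω using hω.1
  filter_upwards [hDall, key xs hxs.1 hxs.2] with ω h1 h2
  refine det_concl X _ hXclosed (fun x => 1 / f x) ?_ xs hxs rfl D hDd (fun k => γ k / β k) ha hdiv
    (fun k => xk k ω) (fun k => hX k ω) h2.2 h2.1 h1
  exact continuousOn_const.div hfc.continuousOn fun x hx => (hε0.trans_le (hflb x hx)).ne'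
end
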